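/- arXiv:1912.01994 — 3 statements merged into one kernel-verified Lean document; each statement's English description precedes it below -/
import Mathlib

section
/- The Golomb space ℕ_τ is topologically rigid: every homeomorphism h : ℕ_τ → ℕ_τ is the identity map (equivalently, the homeomorphism group of ℕ_τ is trivial). -/
/-!
Let `h` be a self-homeomorphism of the Golomb space. The closure of `a + bℕ₀` consists of the `w`
which, at each prime `p ∣ b`, are divisible by `p` or congruent to `a` modulo the `p`-part of `b`.
It follows that three distinct points are pairwise coprime exactly when every closure of a nonempty
open set contains an intersection of closures of neighbourhoods of the three points
(`ClosureTriple`). So `h` preserves coprimality; hence it fixes `1`, it induces a permutation `σ`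
of the primes with `p ∣ x ↔ σ p ∣ h x` (`InducesOnPrimes`), and it maps powers of `p` to powers of
`σ p`. The same closures show that `h` is continuous from the `p`-adic topology on `ℕ \ pℕ` to the
`σ p`-adic topology on `ℕ \ σ(p)ℕ` (`InducesOnPrimes.padic_continuity`).

Consequently `σ` preserves, for each prime `p`, the preorder (`s` lies in the closed subgroup of
`ℤ_p^×` generated by `r`) on the primes different from `p` (`PrimesNe`). By Dirichlet's theorem
every open procyclic subgroup of `ℤ_p^×` is generated by a prime, so this preorder sees the whole
poset of these subgroups. The prime `2` is the only one for which `ℤ_p^×` is not procyclic, that is,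
for which the preorder has no greatest element, so `σ 2 = 2`. For odd `p` the group `1 + p ℤ_p`
consists of the elements below which the preorder is a chain; for `p = 2` the group `1 + 8 ℤ_2`
consists of the elements which are not maximal. Each further group `1 + p ^ (n + 1) ℤ_p` is obtained
from the preceding one by removing its generators. Hence `r ≡ 1` modulo `p ^ n` iff `σ r ≡ 1` modulo
`σ(p) ^ n`, except possibly for `p ^ n = 4`. This already forces `h 3, h 5 ∈ {3, 5}`, the values of
`h` at `3` and `4` exclude an interchange, and the missing group `1 + 4 ℤ_2` is generated by
`5 = h 5`. By density of the primes, `p ^ n ∣ x - 1` iff `σ(p) ^ n ∣ h x - 1` for all `x`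
(`InducesOnPrimes.pow_dvd_sub_one_iff`). Since the prime divisors of `x - 1` are smaller than `x`,
strong induction gives `h x - 1 = x - 1`.
-/

open TopologicalSpace

/-- The arithmetic progression `a + bℕ₀ = {a + b*n : n ≥ 0}` inside the positive integers. -/
def golombBasic (a b : ℕ) : Set ℕ+ := {x : ℕ+ | ∃ n : ℕ, (x : ℕ) = a + b * n}

/-- The Golomb topology on the positive integers, generated by the arithmetic
progressions `a + bℕ₀` with coprime `a, b ∈ ℕ`. -/
instance golombTopology : TopologicalSpace ℕ+ :=
  generateFrom {S : Set ℕ+ | ∃ a b : ℕ, 0 < a ∧ 0 < b ∧ Nat.Coprime a b ∧ S = golombBasic a b}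

/-- The positive integers not divisible by `p` (the set `ℕ \ pℕ`). -/
abbrev Np (p : ℕ) : Type := {x : ℕ+ // ¬ p ∣ (x : ℕ)}

/-- The `p`-adic topology on `ℕ \ pℕ`, generated by the traces of the sets
`x + p^nℕ₀`, `x, n ∈ ℕ`. -/
def padicTop (p : ℕ) : TopologicalSpace (Np p) :=
  generateFrom {S : Set (Np p) | ∃ x n : ℕ, 0 < x ∧ 0 < n ∧
    S = {y : Np p | ∃ k : ℕ, ((y : ℕ+) : ℕ) = x + p ^ n * k}}

/-- Closure of a set of positive integers in the `p`-adic topology on `ℕ \ pℕ`,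
viewed again as a set of positive integers. -/
def padicClosure (p : ℕ) (A : Set ℕ+) : Set ℕ+ :=
  Subtype.val '' (@closure (Np p) (padicTop p) (Subtype.val ⁻¹' A))

/-- `a^ℕ = {a^k : k ∈ ℕ}`, the set of positive powers of `a`. -/
def powSet (a : ℕ) : Set ℕ+ := {y : ℕ+ | ∃ k : ℕ, 0 < k ∧ (y : ℕ) = a ^ k}

/-- The closure of `a^ℕ` in the `p`-adic topology on `ℕ \ pℕ`. -/
def clPow (p a : ℕ) : Set ℕ+ := padicClosure p (powSet a)

/-- The family `𝒳_p` of closures of the sets `a^ℕ` for `a ∈ ℕ \ pℕ`, `a ≠ 1`. -/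
def XX (p : ℕ) : Set (Set ℕ+) := {X | ∃ a : ℕ, 0 < a ∧ a ≠ 1 ∧ ¬ p ∣ a ∧ X = clPow p a}

/-- The projection `π_n(X)` of a set of positive integers to `ℤ/p^nℤ`. -/
def pin (p n : ℕ) (X : Set ℕ+) : Set (ZMod (p ^ n)) :=
  (fun y : ℕ+ => ((y : ℕ) : ZMod (p ^ n))) '' X

/-- `n(X)`: the least `n ∈ ℕ` with `X = ℕ ∩ π_n⁻¹(π_n(X))` and `|π_n(X)| ≥ max(p,3)`. -/
noncomputable def nX (p : ℕ) (X : Set ℕ+) : ℕ :=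
  sInf {n : ℕ | 0 < n ∧ X = {y : ℕ+ | ((y : ℕ) : ZMod (p ^ n)) ∈ pin p n X} ∧
    max p 3 ≤ (pin p n X).ncard}

/-- `i(X)`: the index of the subgroup `π_{n(X)}(X)` in the group of units of `ℤ/p^{n(X)}ℤ`. -/
noncomputable def iX (p : ℕ) (X : Set ℕ+) : ℕ :=
  Nat.card ((ZMod (p ^ nX p X))ˣ) / (pin p (nX p X) X).ncard

namespace GolombRigid

open Filter Topology

/-! ### Closures of powers in the `p`-adic units -/

theorem exists_eq_one_add_pow_mul {p x : ℕ} (hp : p ≠ 1) (hx : 1 < x) :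
    ∃ m u, ¬ p ∣ u ∧ x = 1 + p ^ m * u := by
  obtain ⟨m, u, hu, h⟩ := Nat.exists_eq_pow_mul_and_not_dvd (Nat.sub_ne_zero_of_lt hx) p hp
  exact ⟨m, u, hu, by omega⟩

theorem one_add_pow_mul_modEq_one_iff {p m n u : ℕ} (hp : p.Prime) (hu : ¬ p ∣ u) :
    1 + p ^ m * u ≡ 1 [MOD p ^ n] ↔ n ≤ m := by
  have hfact : (p ^ m * u).factorization p = m := by
    rw [Nat.factorization_mul (pow_ne_zero m hp.ne_zero) (by rintro rfl; simp at hu),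
      hp.factorization_pow]
    simp [Nat.factorization_eq_zero_of_not_dvd hu]
  rw [Nat.add_modEq_left_iff, hp.pow_dvd_iff_le_factorization, hfact]
  exact mul_ne_zero (pow_ne_zero m hp.ne_zero) (by rintro rfl; simp at hu)

theorem dvd_iff_of_modEq_pow {p a b n : ℕ} (hn : n ≠ 0) (h : a ≡ b [MOD p ^ n]) :
    p ∣ a ↔ p ∣ b :=
  (h.of_dvd (dvd_pow_self p hn)).dvd_iff dvd_rfl

/-- `InPowClosure p s r` says that `s` lies in the `p`-adic closure of the powers of `r`; this is
tested modulo each `p ^ n`. -/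
def InPowClosure (p s r : ℕ) : Prop :=
  ∀ n, (s : ZMod (p ^ n)) ∈ Submonoid.powers (r : ZMod (p ^ n))

theorem inPowClosure_iff {p s r : ℕ} :
    InPowClosure p s r ↔ ∀ n, ∃ k, s ≡ r ^ k [MOD p ^ n] := by
  simp_rw [InPowClosure, Submonoid.mem_powers_iff, eq_comm, ← ZMod.natCast_eq_natCast_iff,
    Nat.cast_pow]

theorem InPowClosure.refl (p r : ℕ) : InPowClosure p r r :=
  fun _ => Submonoid.mem_powers _

theorem InPowClosure.trans {p a b c : ℕ} (hab : InPowClosure p a b) (hbc : InPowClosure p b c) :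
    InPowClosure p a c :=
  fun n => Submonoid.powers_le.2 (hbc n) (hab n)

theorem InPowClosure.modEq_one {p s r n : ℕ} (h : InPowClosure p s r) (hr : r ≡ 1 [MOD p ^ n]) :
    s ≡ 1 [MOD p ^ n] := by
  obtain ⟨k, hk⟩ := inPowClosure_iff.1 h n
  simpa using hk.trans (hr.pow k)

theorem exponent_bounds_of_two_lt_pow {p m : ℕ} (hp : p.Prime) (hm : 2 < p ^ m) :
    m ≠ 0 ∧ m + 2 ≤ p * m := by
  have hm0 : m ≠ 0 := by rintro rfl; simp at hm
  refine ⟨hm0, ?_⟩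
  rcases hp.eq_two_or_odd' with rfl | hodd
  · have : m ≠ 1 := by rintro rfl; simp at hm
    omega
  · have : 3 ≤ p := by have := hp.two_le; have := hodd.ne_two_of_dvd_nat dvd_rfl; omega
    nlinarith [Nat.pos_of_ne_zero hm0]

theorem orderOf_cast_one_add_pow_mul {p m u : ℕ} (hp : p.Prime) (hm : 2 < p ^ m) (hu : ¬ p ∣ u)
    (k : ℕ) : orderOf ((1 + p ^ m * u : ℕ) : ZMod (p ^ (k + m))) = p ^ k := by
  obtain ⟨hm0, hpm⟩ := exponent_bounds_of_two_lt_pow hp hm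
  simpa using ZMod.orderOf_one_add_mul_prime_pow hp m hm0 hpm u (by exact_mod_cast hu) k

theorem not_pow_modEq_pow_prime_pow {p m r e u : ℕ} (hp : p.Prime) (hm : 2 < p ^ m) (hu : ¬ p ∣ u)
    (hre : r ^ e = 1 + p ^ m * u) (he : ¬ p ∣ e) (k : ℕ) :
    ¬ r ^ e ≡ (r ^ p) ^ k [MOD p ^ (1 + m)] := by
  intro h
  have hx := orderOf_cast_one_add_pow_mul hp hm hu 1
  rw [← hre, pow_one] at hx
  have hxp : ((r ^ e : ℕ) : ZMod (p ^ (1 + m))) ^ p = 1 := by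
    simpa only [hx] using pow_orderOf_eq_one ((r ^ e : ℕ) : ZMod (p ^ (1 + m)))
  refine he (hx ▸ orderOf_dvd_of_pow_eq_one ?_)
  rw [(ZMod.natCast_eq_natCast_iff _ _ _).2 h]
  calc (((r ^ p) ^ k : ℕ) : ZMod (p ^ (1 + m))) ^ e
      = (((r ^ e : ℕ) : ZMod (p ^ (1 + m))) ^ p) ^ k := by push_cast; ring
    _ = 1 := by rw [hxp, one_pow]

theorem exists_lt_modEq_add_mul {a t m k : ℕ} (hk : k ≠ 0) (h : t ≡ a [MOD m]) :
    ∃ c < k, t ≡ a + m * c [MOD k * m] := by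
  obtain ⟨d, hd⟩ := Nat.modEq_iff_dvd.1 h.symm
  have hk' : (k : ℤ) ≠ 0 := by exact_mod_cast hk
  obtain ⟨c, hc⟩ := Int.eq_ofNat_of_zero_le (Int.emod_nonneg d hk')
  refine ⟨c, ?_, (Nat.modEq_iff_dvd.2 ⟨d / k, ?_⟩).symm⟩
  · have := Int.emod_lt_of_pos d (by omega : (0 : ℤ) < k)
    omega
  · push_cast
    linear_combination hd + m * hc - m * Int.mul_ediv_add_emod d k

/-- The powers of `1 + p ^ m * u` fill the residue classes `≡ 1` modulo `p ^ m` because there are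
equally many of both. -/
theorem cast_mem_powers_one_add_pow_mul {p m u s : ℕ} (hp : p.Prime) (hm : 2 < p ^ m)
    (hu : ¬ p ∣ u) (hs : s ≡ 1 [MOD p ^ m]) (k : ℕ) :
    (s : ZMod (p ^ (k + m))) ∈ Submonoid.powers ((1 + p ^ m * u : ℕ) : ZMod (p ^ (k + m))) := by
  let x : ZMod (p ^ (k + m)) := ((1 + p ^ m * u : ℕ) : ZMod (p ^ (k + m)))
  let P : Finset (ZMod (p ^ (k + m))) := (Finset.range (p ^ k)).image (x ^ ·)
  let S : Finset (ZMod (p ^ (k + m))) :=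
    (Finset.range (p ^ k)).image fun c => ((1 + p ^ m * c : ℕ) : ZMod (p ^ (k + m)))
  have mem_S {t : ℕ} (ht : t ≡ 1 [MOD p ^ m]) : (t : ZMod (p ^ (k + m))) ∈ S := by
    obtain ⟨c, hc, h⟩ := exists_lt_modEq_add_mul (pow_ne_zero k hp.ne_zero) ht
    rw [← pow_add, ← ZMod.natCast_eq_natCast_iff] at h
    exact Finset.mem_image.2 ⟨c, Finset.mem_range.2 hc, h.symm⟩
  have hPS : P ⊆ S := by
    refine Finset.image_subset_iff.2 fun i _ => ?_
    have hi := ((one_add_pow_mul_modEq_one_iff hp hu).2 (le_refl m)).pow i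
    rw [one_pow] at hi
    simpa only [x, Nat.cast_pow] using mem_S hi
  have hcard : S.card ≤ P.card := by
    have hP : P.card = p ^ k := by
      rw [Finset.card_image_of_injOn, Finset.card_range]
      have hinj := pow_injOn_Iio_orderOf (x := x)
      rwa [orderOf_cast_one_add_pow_mul hp hm hu, ← Finset.coe_range] at hinj
    rw [hP]
    exact Finset.card_image_le.trans (Finset.card_range _).le
  obtain ⟨i, -, hi⟩ := Finset.mem_image.1 (Finset.eq_of_subset_of_card_le hPS hcard ▸ mem_S hs)
  exact ⟨i, hi⟩

theorem inPowClosure_of_modEq {p m r s e j u : ℕ} (hp : p.Prime) (hr : ¬ p ∣ r)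
    (hre : r ^ e = 1 + p ^ m * u) (hu : ¬ p ∣ u) (hm : 2 < p ^ m)
    (hs : s ≡ r ^ j [MOD p ^ m]) : InPowClosure p s r := by
  refine inPowClosure_iff.2 fun k => ?_
  obtain ⟨φ, hφpos, hφ⟩ : ∃ φ, 0 < φ ∧ r ^ φ ≡ 1 [MOD p ^ (k + m)] :=
    ⟨_, Nat.totient_pos.2 (pow_pos hp.pos _),
      Nat.ModEq.pow_totient ((hp.coprime_iff_not_dvd.2 hr).symm.pow_right _)⟩
  have hinv : r ^ ((φ - 1) * j) * r ^ j ≡ 1 [MOD p ^ (k + m)] := by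
    rw [← pow_add, ← Nat.succ_mul, Nat.succ_eq_add_one, Nat.sub_add_cancel hφpos, pow_mul]
    simpa using hφ.pow j
  -- dividing `s` by `r ^ j` reduces to the case `j = 0`
  have ht : s * r ^ ((φ - 1) * j) ≡ 1 [MOD p ^ m] := by
    refine (hs.mul_right _).trans ?_
    rw [mul_comm]
    exact hinv.of_dvd (pow_dvd_pow p (Nat.le_add_left m k))
  obtain ⟨i, hi⟩ := cast_mem_powers_one_add_pow_mul hp hm hu ht k
  refine ⟨e * i + j, Nat.ModEq.of_dvd (pow_dvd_pow p (Nat.le_add_right k m)) ?_⟩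
  have hi' : s * r ^ ((φ - 1) * j) ≡ r ^ (e * i) [MOD p ^ (k + m)] := by
    rw [← ZMod.natCast_eq_natCast_iff, ← hi, pow_mul r e, hre, Nat.cast_pow]
  calc s = s * 1 := (mul_one s).symm
    _ ≡ s * (r ^ ((φ - 1) * j) * r ^ j) [MOD p ^ (k + m)] := hinv.symm.mul_left s
    _ = s * r ^ ((φ - 1) * j) * r ^ j := (mul_assoc ..).symm
    _ ≡ r ^ (e * i) * r ^ j [MOD p ^ (k + m)] := hi'.mul_right _
    _ = r ^ (e * i + j) := (pow_add ..).symm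

/-! ### The preorder on the primes different from `p` -/

/-- The primes different from `p`. This is a definition and not a subtype so that it does not
inherit the usual order of the primes. -/
def PrimesNe (p : Nat.Primes) : Type := {r : Nat.Primes // r ≠ p}

namespace PrimesNe

variable {p : Nat.Primes}

instance : CoeOut (PrimesNe p) ℕ := ⟨fun r => (r.1 : ℕ)⟩

/-- `s ≤ r` if `s` lies in the closed subgroup of the `p`-adic units generated by `r`. -/
instance : Preorder (PrimesNe p) where
  le s r := InPowClosure p s r
  le_refl r := .refl p r
  le_trans _ _ _ := .trans

theorem le_def {s r : PrimesNe p} : s ≤ r ↔ InPowClosure p s r := Iff.rfl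

theorem not_dvd (r : PrimesNe p) : ¬ (p : ℕ) ∣ r := fun h =>
  r.2 (Nat.Primes.coe_nat_inj _ _ |>.1 ((Nat.prime_dvd_prime_iff_eq p.2 r.1.2).1 h).symm)

theorem one_lt (r : PrimesNe p) : 1 < (r : ℕ) := r.1.2.one_lt

theorem exists_modEq {a : ℕ} (ha : ¬ (p : ℕ) ∣ a) (n : ℕ) :
    ∃ r : PrimesNe p, r ≡ a [MOD p ^ n] := by
  obtain ⟨r, hr, hrp, h⟩ := Nat.forall_exists_prime_gt_and_modEq p (pow_ne_zero n p.2.ne_zero)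
    ((p.2.coprime_iff_not_dvd.2 ha).symm.pow_right n)
  exact ⟨⟨⟨r, hrp⟩, fun hp => hr.ne' (congrArg Subtype.val hp)⟩, h⟩

theorem exists_cast_eq {n : ℕ} (hn : n ≠ 0) (a : (ZMod ((p : ℕ) ^ n))ˣ) :
    ∃ r : PrimesNe p, ((r : ℕ) : ZMod (p ^ n)) = a := by
  have : NeZero ((p : ℕ) ^ n) := ⟨pow_ne_zero n p.2.ne_zero⟩
  have ha : ¬ (p : ℕ) ∣ (a : ZMod (p ^ n)).val := fun h =>
    Nat.not_coprime_of_dvd_of_dvd p.2.one_lt h (dvd_pow_self _ hn) (ZMod.val_coe_unit_coprime a)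
  obtain ⟨r, hr⟩ := exists_modEq ha n
  exact ⟨r, ((ZMod.natCast_eq_natCast_iff _ _ _).2 hr).trans (ZMod.natCast_zmod_val _)⟩

theorem isUnit_cast (r : PrimesNe p) (n : ℕ) : IsUnit ((r : ℕ) : ZMod (p ^ n)) :=
  (ZMod.isUnit_iff_coprime _ _).2 ((p.2.coprime_iff_not_dvd.2 r.not_dvd).symm.pow_right n)

theorem pow_pred_modEq_one (r : PrimesNe p) : (r : ℕ) ^ ((p : ℕ) - 1) ≡ 1 [MOD p] := by
  rw [← Nat.totient_prime p.2]
  exact Nat.ModEq.pow_totient (p.2.coprime_iff_not_dvd.2 r.not_dvd).symm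

theorem exists_pow_pred_eq (r : PrimesNe p) :
    ∃ m u, 1 ≤ m ∧ ¬ (p : ℕ) ∣ u ∧ (r : ℕ) ^ ((p : ℕ) - 1) = 1 + p ^ m * u := by
  obtain ⟨m, u, hu, hm⟩ := exists_eq_one_add_pow_mul p.2.ne_one
    (one_lt_pow₀ r.one_lt (Nat.sub_ne_zero_of_lt p.2.one_lt))
  refine ⟨m, u, ?_, hu, hm⟩
  rw [← one_add_pow_mul_modEq_one_iff p.2 hu, pow_one, ← hm]
  exact r.pow_pred_modEq_one

end PrimesNe

/-- The primes `r ≠ p` lying in the higher unit group `1 + p ^ m ℤ_p`. -/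
def higherUnits (p : Nat.Primes) (m : ℕ) : Set (PrimesNe p) := {r | r ≡ 1 [MOD p ^ m]}

section HigherUnits

variable {p : Nat.Primes} {m n : ℕ} {r : PrimesNe p}

theorem mem_higherUnits : r ∈ higherUnits p m ↔ r ≡ 1 [MOD p ^ m] := Iff.rfl

theorem isLowerSet_higherUnits : IsLowerSet (higherUnits p m) :=
  fun _ _ hsr hr => InPowClosure.modEq_one hsr hr

theorem antitone_higherUnits : Antitone (higherUnits p) :=
  fun _ _ hmn _ hr => hr.of_dvd (pow_dvd_pow _ hmn)

theorem mem_upperBounds_higherUnits (hm : 2 < (p : ℕ) ^ m) (hr : r ∈ higherUnits p m)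
    (hr' : r ∉ higherUnits p (m + 1)) : r ∈ upperBounds (higherUnits p m) := by
  intro s hs
  obtain ⟨k, u, hu, hk⟩ := exists_eq_one_add_pow_mul p.2.ne_one r.one_lt
  rw [mem_higherUnits, hk, one_add_pow_mul_modEq_one_iff p.2 hu] at hr hr'
  obtain rfl : m = k := by omega
  exact inPowClosure_of_modEq (e := 1) (j := 0) p.2 r.not_dvd ((pow_one _).trans hk) hu hm
    (by simpa [mem_higherUnits] using hs)

theorem higherUnits_succ (hm : 2 < (p : ℕ) ^ m) :
    higherUnits p (m + 1) = higherUnits p m \ upperBounds (higherUnits p m) := by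
  ext r
  refine ⟨fun hr => ⟨antitone_higherUnits m.le_succ hr, fun hub => ?_⟩, fun hr => ?_⟩
  · have h1 : ¬ (p : ℕ) ∣ 1 := p.2.not_dvd_one
    have hunit : ¬ (p : ℕ) ∣ 1 + p ^ m * 1 :=
      (dvd_iff_of_modEq_pow (exponent_bounds_of_two_lt_pow p.2 hm).1
        ((one_add_pow_mul_modEq_one_iff p.2 h1).2 le_rfl)).not.2 h1
    obtain ⟨t, ht⟩ := PrimesNe.exists_modEq hunit (m + 1)
    have htm : t ∈ higherUnits p m := (ht.of_dvd (pow_dvd_pow _ m.le_succ)).trans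
      ((one_add_pow_mul_modEq_one_iff p.2 h1).2 le_rfl)
    have := (one_add_pow_mul_modEq_one_iff p.2 h1).1
      (ht.symm.trans (isLowerSet_higherUnits (hub htm) hr))
    omega
  · by_contra h
    exact hr.2 (mem_upperBounds_higherUnits hm hr.1 h)

theorem exists_mem_higherUnits_notMem_succ (hr : r ∈ higherUnits p m) :
    ∃ k, m ≤ k ∧ r ∈ higherUnits p k ∧ r ∉ higherUnits p (k + 1) := by
  obtain ⟨k, u, hu, hk⟩ := exists_eq_one_add_pow_mul p.2.ne_one r.one_lt
  have hrk (l : ℕ) : r ∈ higherUnits p l ↔ l ≤ k := by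
    rw [mem_higherUnits, hk, one_add_pow_mul_modEq_one_iff p.2 hu]
  exact ⟨k, (hrk m).1 hr, (hrk k).2 le_rfl, by simp [hrk]⟩

theorem isChain_higherUnits (hm : 2 < (p : ℕ) ^ m) : IsChain (· ≤ ·) (higherUnits p m) := by
  have two_lt {k : ℕ} (hmk : m ≤ k) : 2 < (p : ℕ) ^ k :=
    hm.trans_le (Nat.pow_le_pow_right p.2.pos hmk)
  intro s hs t ht _
  obtain ⟨k, hmk, hsk, hsk'⟩ := exists_mem_higherUnits_notMem_succ hs
  obtain ⟨l, hml, htl, htl'⟩ := exists_mem_higherUnits_notMem_succ ht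
  rcases le_total k l with hkl | hlk
  · exact .inr (mem_upperBounds_higherUnits (two_lt hmk) hsk hsk' (antitone_higherUnits hkl htl))
  · exact .inl (mem_upperBounds_higherUnits (two_lt hml) htl htl' (antitone_higherUnits hlk hsk))

theorem higherUnits_eq_univ (hm : (p : ℕ) ^ m ≤ 2) : higherUnits p m = Set.univ := by
  refine Set.eq_univ_of_forall fun r => ?_
  have hm0 := pow_pos p.2.pos m
  obtain h1 | h2 : (p : ℕ) ^ m = 1 ∨ (p : ℕ) ^ m = 2 := by omega
  · rw [mem_higherUnits, h1]
    exact Nat.modEq_one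
  · obtain ⟨hp, rfl⟩ := (Nat.Prime.pow_eq_iff Nat.prime_two).1 h2
    have hr := r.not_dvd
    rw [mem_higherUnits, h2]
    rw [hp] at hr
    exact Nat.odd_iff.1 (Nat.not_even_iff_odd.1 (mt Even.two_dvd hr))

/-- If `r` is not `1` modulo `p`, then the subgroups generated by `r ^ (p - 1)` and `r ^ p` are
incomparable. -/
theorem mem_higherUnits_one_of_isChain (hp : (p : ℕ) ≠ 2) (hr : IsChain (· ≤ ·) (Set.Iic r)) :
    r ∈ higherUnits p 1 := by
  have hp2 : 2 < (p : ℕ) ^ 1 := by simpa using lt_of_le_of_ne p.2.two_le hp.symm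
  have hrp := r.not_dvd
  have hfermat := r.pow_pred_modEq_one
  obtain ⟨m, u, hm1, hu, hm⟩ := r.exists_pow_pred_eq
  have hm2 : 2 < (p : ℕ) ^ m := hp2.trans_le (Nat.pow_le_pow_right p.2.pos hm1)
  obtain ⟨t, ht⟩ := PrimesNe.exists_modEq (mt p.2.dvd_of_dvd_pow hrp : ¬ (p : ℕ) ∣ r ^ (p - 1 : ℕ))
    (1 + m)
  obtain ⟨s, hs⟩ := PrimesNe.exists_modEq (mt p.2.dvd_of_dvd_pow hrp : ¬ (p : ℕ) ∣ r ^ (p : ℕ))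
    (1 + m)
  have hmm : (p : ℕ) ^ m ∣ p ^ (1 + m) := pow_dvd_pow _ (Nat.le_add_left m 1)
  have htr : t ≤ r := inPowClosure_of_modEq p.2 hrp hm hu hm2 (ht.of_dvd hmm)
  have hsr : s ≤ r := inPowClosure_of_modEq p.2 hrp hm hu hm2 (hs.of_dvd hmm)
  rcases hr.total hsr htr with hst | hts
  · have ht1 : t ∈ higherUnits p 1 := by
      rw [mem_higherUnits, pow_one]
      exact (ht.of_dvd (dvd_pow_self _ (by omega))).trans hfermat
    have hrs : (r : ℕ) ≡ s [MOD p ^ 1] := by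
      have := hfermat.mul_right (r : ℕ)
      rw [← pow_succ, Nat.sub_add_cancel p.2.one_le, one_mul] at this
      rw [pow_one]
      exact this.symm.trans (hs.of_dvd (dvd_pow_self _ (by omega))).symm
    exact hrs.trans (isLowerSet_higherUnits hst ht1)
  · obtain ⟨k, hk⟩ := inPowClosure_iff.1 (PrimesNe.le_def.1 hts) (1 + m)
    exact absurd (ht.symm.trans (hk.trans (hs.pow k))) (not_pow_modEq_pow_prime_pow p.2 hm2 hu hm
      (Nat.not_dvd_of_pos_of_lt (Nat.sub_pos_of_lt p.2.one_lt) (Nat.sub_lt p.2.pos one_pos)) k)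

theorem higherUnits_one_eq (hp : (p : ℕ) ≠ 2) :
    higherUnits p 1 = {r | IsChain (· ≤ ·) (Set.Iic r)} := by
  have hp2 : 2 < (p : ℕ) ^ 1 := by simpa using lt_of_le_of_ne p.2.two_le hp.symm
  exact Set.Subset.antisymm
    (fun _ hr => (isChain_higherUnits hp2).mono fun _ hs => isLowerSet_higherUnits hs hr)
    fun _ => mem_higherUnits_one_of_isChain hp

end HigherUnits

section TopElement

variable {p : Nat.Primes} {r : PrimesNe p}

theorem isCyclic_units_of_isTop (hr : IsTop r) {n : ℕ} (hn : n ≠ 0) :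
    IsCyclic (ZMod ((p : ℕ) ^ n))ˣ := by
  refine ⟨(r.isUnit_cast n).unit, fun a => ?_⟩
  obtain ⟨s, hs⟩ := PrimesNe.exists_cast_eq hn a
  obtain ⟨k, hk⟩ := PrimesNe.le_def.1 (hr s) n
  exact ⟨k, Units.ext (by simpa using hk.trans hs)⟩

/-- A prime which is a primitive root modulo `p ^ 2` generates the `p`-adic units. -/
theorem exists_isTop (hp : (p : ℕ) ≠ 2) : ∃ r : PrimesNe p, IsTop r := by
  have : NeZero ((p : ℕ) ^ 2) := ⟨pow_ne_zero 2 p.2.ne_zero⟩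
  obtain ⟨g, hg⟩ := ZMod.isCyclic_units_of_prime_pow p p.2 hp 2
  obtain ⟨r, hr⟩ := PrimesNe.exists_cast_eq two_ne_zero g
  obtain ⟨m, u, hm1, hu, hm⟩ := r.exists_pow_pred_eq
  have horder : orderOf g = p * (p - 1) := by
    rw [orderOf_eq_card_of_forall_mem_zpowers hg, Nat.card_eq_fintype_card,
      ZMod.card_units_eq_totient, Nat.totient_prime_pow_succ p.2 1, pow_one]
  have hm2 : m < 2 := by
    by_contra! h2m
    have hgp : g ^ ((p : ℕ) - 1) = 1 := by
      ext
      rw [Units.val_pow_eq_pow_val, ← hr, Units.val_one, ← Nat.cast_pow, hm]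
      exact ((ZMod.natCast_eq_natCast_iff _ 1 _).2
        ((one_add_pow_mul_modEq_one_iff p.2 hu).2 h2m)).trans Nat.cast_one
    have hpred : 0 < (p : ℕ) - 1 := Nat.sub_pos_of_lt p.2.one_lt
    have hle := Nat.le_of_dvd hpred (horder ▸ orderOf_dvd_of_pow_eq_one hgp)
    nlinarith [p.2.two_le]
  obtain rfl : m = 1 := by omega
  refine ⟨r, fun s => ?_⟩
  obtain ⟨j, hj⟩ := mem_powers_iff_mem_zpowers.2 (hg (s.isUnit_cast 2).unit)
  refine inPowClosure_of_modEq (j := j) p.2 r.not_dvd hm hu ?_ ?_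
  · simpa using lt_of_le_of_ne p.2.two_le hp.symm
  · refine Nat.ModEq.of_dvd (pow_dvd_pow _ one_le_two) ((ZMod.natCast_eq_natCast_iff _ _ _).1 ?_)
    rw [Nat.cast_pow, hr]
    exact (congrArg Units.val hj).symm

theorem exists_isTop_iff : (∃ r : PrimesNe p, IsTop r) ↔ (p : ℕ) ≠ 2 := by
  refine ⟨fun ⟨r, hr⟩ hp => ZMod.not_isCyclic_units_eight ?_, exists_isTop⟩
  have h := isCyclic_units_of_isTop hr three_ne_zero
  rwa [hp] at h

end TopElement

section TwoAdic

variable {p : Nat.Primes} {r : PrimesNe p}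

theorem exists_modEq_pow_pow_of_odd {a k : ℕ} (ha : Odd a) (hk : Odd k) (n : ℕ) :
    ∃ i, a ≡ (a ^ k) ^ i [MOD 2 ^ n] := by
  have hpow : (a : ZMod (2 ^ (n + 1))) ^ 2 ^ n = 1 := by
    have h := Nat.ModEq.pow_totient ((Nat.coprime_two_right.2 ha).pow_right (n + 1))
    rw [Nat.totient_prime_pow_succ Nat.prime_two, Nat.add_one_sub_one, mul_one,
      ← ZMod.natCast_eq_natCast_iff] at h
    simpa using h
  obtain ⟨i, hi⟩ := exists_pow_eq_self_of_coprime
    (((Nat.coprime_two_right.2 hk).pow_right n).coprime_dvd_right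
      (orderOf_dvd_of_pow_eq_one hpow))
  refine ⟨i, Nat.ModEq.of_dvd (pow_dvd_pow 2 n.le_succ) ?_⟩
  rw [← ZMod.natCast_eq_natCast_iff]
  exact_mod_cast hi.symm

theorem sq_modEq_one_of_odd {a : ℕ} (ha : Odd a) : a ^ 2 ≡ 1 [MOD 8] :=
  ((Nat.modEq_iff_dvd' (Nat.one_le_pow _ _ ha.pos)).2 (Nat.eight_dvd_sq_sub_one_of_odd ha)).symm

theorem higherUnits_two_eq_Iic (hp : (p : ℕ) = 2) (hr : (r : ℕ) = 5) :
    higherUnits p 2 = Set.Iic r := by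
  have h5 : r ∈ higherUnits p 2 := by rw [mem_higherUnits, hr, hp]; rfl
  refine Set.Subset.antisymm ?_ fun s hs => isLowerSet_higherUnits hs h5
  refine fun s hs => mem_upperBounds_higherUnits (by simp [hp]) h5 ?_ hs
  rw [mem_higherUnits, hr, hp]
  decide

/-- The squares of the `2`-adic units are `≡ 1` modulo `8`, so a unit which is not `≡ 1` modulo `8`
is only a power with an odd exponent, and an odd power generates the same closed subgroup. -/
theorem higherUnits_three_eq (hp : (p : ℕ) = 2) : higherUnits p 3 = {r | ¬ IsMax r} := by
  refine Set.Subset.antisymm (fun r hr hmax => ?_) fun r (hr : ¬ IsMax r) => ?_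
  · let five : PrimesNe p := ⟨⟨5, Nat.prime_five⟩, fun h => by simp [← h] at hp⟩
    have h5 : r ≤ five := by
      rw [← Set.mem_Iic, ← higherUnits_two_eq_Iic hp rfl]
      exact antitone_higherUnits (Nat.le_succ 2) hr
    have h1 : 5 ≡ 1 [MOD (p : ℕ) ^ 3] := isLowerSet_higherUnits (hmax h5) hr
    rw [hp] at h1
    exact absurd h1 (by decide)
  · by_contra h8
    refine hr fun t hrt => inPowClosure_iff.2 fun n => ?_
    obtain ⟨k, hk⟩ := inPowClosure_iff.1 (PrimesNe.le_def.1 hrt) (n + 3)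
    have ht := t.not_dvd
    rw [hp] at hk ht ⊢
    have ht_odd : Odd (t : ℕ) := Nat.not_even_iff_odd.1 (mt Even.two_dvd ht)
    have hk_odd : Odd k := by
      by_contra hk_even
      obtain ⟨j, rfl⟩ := even_iff_exists_two_mul.1 (Nat.not_odd_iff_even.1 hk_even)
      refine h8 (mem_higherUnits.2 ?_)
      rw [hp]
      refine (hk.of_dvd (pow_dvd_pow 2 (Nat.le_add_left 3 n))).trans ?_
      rw [mul_comm, pow_mul]
      exact sq_modEq_one_of_odd ht_odd.pow
    obtain ⟨i, hi⟩ := exists_modEq_pow_pow_of_odd ht_odd hk_odd n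
    exact ⟨i, hi.trans ((hk.of_dvd (pow_dvd_pow 2 (Nat.le_add_right n 3))).pow i).symm⟩

end TwoAdic

section OrderIso

variable {p q : Nat.Primes} {m n : ℕ}

theorem eq_two_iff_of_orderIso (e : PrimesNe p ≃o PrimesNe q) : (p : ℕ) = 2 ↔ (q : ℕ) = 2 := by
  rw [← not_iff_not, ← ne_eq, ← ne_eq, ← exists_isTop_iff, ← exists_isTop_iff]
  exact ⟨fun ⟨r, hr⟩ => ⟨e r, fun s => e.symm_apply_le.1 (hr _)⟩,
    fun ⟨r, hr⟩ => ⟨e.symm r, fun s => e.le_symm_apply.2 (hr _)⟩⟩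

theorem image_higherUnits_succ (e : PrimesNe p ≃o PrimesNe q) (hp : 2 < (p : ℕ) ^ m)
    (hq : 2 < (q : ℕ) ^ m) (h : e '' higherUnits p m = higherUnits q m) :
    e '' higherUnits p (m + 1) = higherUnits q (m + 1) := by
  rw [higherUnits_succ hp, Set.image_sdiff e.injective, ← e.upperBounds_image, h,
    higherUnits_succ hq]

theorem image_higherUnits_of_le (e : PrimesNe p ≃o PrimesNe q) (hp : 2 < (p : ℕ) ^ m)
    (hq : 2 < (q : ℕ) ^ m) (h : e '' higherUnits p m = higherUnits q m) (hmn : m ≤ n) :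
    e '' higherUnits p n = higherUnits q n := by
  induction n, hmn using Nat.le_induction with
  | base => exact h
  | succ n hmn ih =>
    exact image_higherUnits_succ e (hp.trans_le (Nat.pow_le_pow_right p.2.pos hmn))
      (hq.trans_le (Nat.pow_le_pow_right q.2.pos hmn)) ih

theorem image_higherUnits_one (e : PrimesNe p ≃o PrimesNe q) (hp : (p : ℕ) ≠ 2) :
    e '' higherUnits p 1 = higherUnits q 1 := by
  rw [higherUnits_one_eq hp, higherUnits_one_eq ((eq_two_iff_of_orderIso e).not.1 hp),
    e.image_eq_preimage_symm]
  ext r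
  change IsChain _ (Set.Iic (e.symm r)) ↔ IsChain _ (Set.Iic r)
  rw [← e.symm.image_Iic]
  refine ⟨fun h => ?_, fun h => e.symm.monotone.isChain_image h⟩
  simpa [Set.image_image] using e.monotone.isChain_image h

theorem image_higherUnits_three (e : PrimesNe p ≃o PrimesNe q) (hp : (p : ℕ) = 2) :
    e '' higherUnits p 3 = higherUnits q 3 := by
  rw [higherUnits_three_eq hp, higherUnits_three_eq ((eq_two_iff_of_orderIso e).1 hp),
    e.image_eq_preimage_symm]
  ext r
  exact e.symm.isMax_apply.not

theorem image_higherUnits (e : PrimesNe p ≃o PrimesNe q) (hn : (p : ℕ) ≠ 2 ∨ n ≠ 2) :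
    e '' higherUnits p n = higherUnits q n := by
  have image_eq_of_le_two (hp : (p : ℕ) ^ n ≤ 2) (hq : (q : ℕ) ^ n ≤ 2) :
      e '' higherUnits p n = higherUnits q n := by
    rw [higherUnits_eq_univ hp, higherUnits_eq_univ hq, Set.image_univ, e.range_eq]
  by_cases hp : (p : ℕ) = 2
  · have hq := (eq_two_iff_of_orderIso e).1 hp
    rcases le_or_gt n 1 with hn1 | hn1
    · have h2 : 2 ^ n ≤ 2 := Nat.pow_le_pow_right two_pos hn1
      exact image_eq_of_le_two (by rwa [hp]) (by rwa [hq])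
    · exact image_higherUnits_of_le e (by simp [hp]) (by simp [hq])
        (image_higherUnits_three e hp) (by omega)
  · have hq := (eq_two_iff_of_orderIso e).not.1 hp
    rcases Nat.eq_zero_or_pos n with rfl | hn0
    · exact image_eq_of_le_two (by simp) (by simp)
    · refine image_higherUnits_of_le e ?_ ?_ (image_higherUnits_one e hp) hn0
      · simpa using lt_of_le_of_ne p.2.two_le (Ne.symm hp)
      · simpa using lt_of_le_of_ne q.2.two_le (Ne.symm hq)

theorem image_higherUnits_two_of_five (e : PrimesNe p ≃o PrimesNe q) (hp : (p : ℕ) = 2)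
    {r : PrimesNe p} (hr : (r : ℕ) = 5) (her : (e r : ℕ) = 5) :
    e '' higherUnits p 2 = higherUnits q 2 := by
  rw [higherUnits_two_eq_Iic hp hr, e.image_Iic,
    higherUnits_two_eq_Iic ((eq_two_iff_of_orderIso e).1 hp) her]

end OrderIso

/-! ### Closures of arithmetic progressions -/

theorem mem_golombBasic_iff {a b : ℕ} {x : ℕ+} :
    x ∈ golombBasic a b ↔ a ≤ x ∧ (x : ℕ) ≡ a [MOD b] := by
  refine ⟨?_, fun ⟨hle, hmod⟩ => ?_⟩
  · rintro ⟨n, hn⟩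
    rw [hn]
    exact ⟨Nat.le_add_right _ _, Nat.add_modEq_left_iff.2 (dvd_mul_right b n)⟩
  · obtain ⟨n, hn⟩ := (Nat.modEq_iff_dvd' hle).1 hmod.symm
    exact ⟨n, by omega⟩

theorem self_mem_golombBasic (x : ℕ+) (b : ℕ) : x ∈ golombBasic x b := ⟨0, by simp⟩

theorem isOpen_golombBasic {a b : ℕ} (ha : 0 < a) (hb : 0 < b) (h : a.Coprime b) :
    IsOpen (golombBasic a b) :=
  isOpen_generateFrom_of_mem ⟨a, b, ha, hb, h, rfl⟩

theorem exists_golombBasic_subset {U : Set ℕ+} (hU : IsOpen U) {x : ℕ+} (hx : x ∈ U) :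
    ∃ b : ℕ, 0 < b ∧ (x : ℕ).Coprime b ∧ golombBasic x b ⊆ U := by
  induction hU with
  | basic s hs =>
    obtain ⟨a, b, -, hb, hab, rfl⟩ := hs
    obtain ⟨hax, hmod⟩ := mem_golombBasic_iff.1 hx
    refine ⟨b, hb, hmod.gcd_eq.trans hab, fun y hy => ?_⟩
    obtain ⟨hxy, hmod'⟩ := mem_golombBasic_iff.1 hy
    exact mem_golombBasic_iff.2 ⟨hax.trans hxy, hmod'.trans hmod⟩
  | univ => exact ⟨1, one_pos, Nat.coprime_one_right _, Set.subset_univ _⟩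
  | inter s t _ _ ihs iht =>
    obtain ⟨b, hb, hxb, hbs⟩ := ihs hx.1
    obtain ⟨c, hc, hxc, hct⟩ := iht hx.2
    refine ⟨b * c, Nat.mul_pos hb hc, hxb.mul_right hxc, fun y hy => ?_⟩
    obtain ⟨hxy, hmod⟩ := mem_golombBasic_iff.1 hy
    exact ⟨hbs (mem_golombBasic_iff.2 ⟨hxy, hmod.of_dvd (dvd_mul_right _ _)⟩),
      hct (mem_golombBasic_iff.2 ⟨hxy, hmod.of_dvd (dvd_mul_left _ _)⟩)⟩
  | sUnion S _ ih =>
    obtain ⟨s, hs, hxs⟩ := hx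
    obtain ⟨b, hb, hxb, hbs⟩ := ih s hs hxs
    exact ⟨b, hb, hxb, hbs.trans (Set.subset_sUnion_of_mem hs)⟩

theorem hasBasis_nhds (x : ℕ+) :
    (𝓝 x).HasBasis (fun b : ℕ => 0 < b ∧ (x : ℕ).Coprime b) (golombBasic x) := by
  refine ⟨fun t => ⟨fun ht => ?_, fun ⟨b, ⟨hb, hxb⟩, hbt⟩ => ?_⟩⟩
  · obtain ⟨U, hUt, hU, hxU⟩ := mem_nhds_iff.1 ht
    obtain ⟨b, hb, hxb, hbU⟩ := exists_golombBasic_subset hU hxU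
    exact ⟨b, ⟨hb, hxb⟩, hbU.trans hUt⟩
  · exact Filter.mem_of_superset
      ((isOpen_golombBasic x.pos hb hxb).mem_nhds (self_mem_golombBasic x b)) hbt

theorem golombBasic_inter_nonempty {a b c d : ℕ} (hb : 0 < b) (hd : 0 < d)
    (h : a ≡ c [MOD b.gcd d]) : (golombBasic a b ∩ golombBasic c d).Nonempty := by
  obtain ⟨k, hka, hkc⟩ := Nat.chineseRemainder' h
  -- a multiple of both moduli is added to pass the initial terms of both progressions
  have hbig : a + c + 1 ≤ b * d * (a + c + 1) := Nat.le_mul_of_pos_left _ (Nat.mul_pos hb hd)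
  refine ⟨⟨k + b * d * (a + c + 1), by omega⟩,
    mem_golombBasic_iff.2 ⟨?_, (Nat.add_modEq_left_iff.2 ?_).trans hka⟩,
    mem_golombBasic_iff.2 ⟨?_, (Nat.add_modEq_left_iff.2 ?_).trans hkc⟩⟩
  · rw [PNat.mk_coe]; omega
  · exact (dvd_mul_right b d).mul_right _
  · rw [PNat.mk_coe]; omega
  · exact (dvd_mul_left d b).mul_right _

theorem mem_closure_golombBasic_iff {a b : ℕ} {w : ℕ+} (hb : 0 < b) :
    w ∈ closure (golombBasic a b) ↔
      ∀ p : ℕ, p.Prime → p ∣ w ∨ (w : ℕ) ≡ a [MOD p ^ b.factorization p] := by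
  refine ⟨fun hw p hp => or_iff_not_imp_left.2 fun hpw => ?_, fun hw => ?_⟩
  · obtain ⟨y, hyw, hya⟩ := mem_closure_iff.1 hw _
      (isOpen_golombBasic w.pos (pow_pos hp.pos (b.factorization p))
        ((hp.coprime_iff_not_dvd.2 hpw).symm.pow_right _)) (self_mem_golombBasic w _)
    exact (mem_golombBasic_iff.1 hyw).2.symm.trans
      ((mem_golombBasic_iff.1 hya).2.of_dvd (Nat.ordProj_dvd b p))
  · rw [mem_closure_iff_nhds_basis (hasBasis_nhds w)]
    rintro c ⟨hc, hwc⟩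
    suffices h : a ≡ w [MOD b.gcd c] from golombBasic_inter_nonempty hb hc h
    rw [Nat.modEq_iff_dvd, Int.natCast_dvd, Nat.dvd_iff_prime_pow_dvd_dvd]
    intro p k hp hk
    rcases eq_or_ne k 0 with rfl | hk0
    · simp
    have hpw : ¬ p ∣ w := fun h => Nat.not_coprime_of_dvd_of_dvd hp.one_lt h
      ((dvd_pow_self p hk0).trans (hk.trans (Nat.gcd_dvd_right b c))) hwc
    have hkb : k ≤ b.factorization p :=
      (hp.pow_dvd_iff_le_factorization hb.ne').1 (hk.trans (Nat.gcd_dvd_left b c))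
    rw [← Int.natCast_dvd, ← Nat.modEq_iff_dvd]
    exact (((hw p hp).resolve_left hpw).of_dvd (pow_dvd_pow p hkb)).symm

theorem exists_dvd_modEq {p m c : ℕ} (hp : p.Prime) (hm : ¬ p ∣ m) (hc : ¬ p ∣ c) (l : ℕ) :
    ∃ w : ℕ+, m ∣ w ∧ (w : ℕ) ≡ c [MOD p ^ l] ∧ ¬ p ∣ w := by
  obtain ⟨w, hwc, hwm⟩ := Nat.chineseRemainder
    ((hp.coprime_iff_not_dvd.2 hm).pow_left (l + 1) : (p ^ (l + 1)).Coprime m) c 0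
  have hpw : ¬ p ∣ w := (dvd_iff_of_modEq_pow l.succ_ne_zero hwc).not.2 hc
  exact ⟨⟨w, Nat.pos_of_ne_zero fun h => hpw (h ▸ dvd_zero p)⟩, Nat.modEq_zero_iff_dvd.1 hwm,
    hwc.of_dvd (pow_dvd_pow p l.le_succ), hpw⟩

/-! ### Coprimality as a topological relation -/

section ClosedNhds

variable {X Y : Type*} [TopologicalSpace X] [TopologicalSpace Y]

/-- The filter generated by the closures of the neighbourhoods of `x`. It differs from the
neighbourhood filter because the Golomb space is not regular. -/
def closedNhds (x : X) : Filter X := (𝓝 x).lift' closure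

/-- A topological property of three points which, for distinct points of the Golomb space, expresses
that they are pairwise coprime: the closure of every nonempty open set contains an intersection of
closures of neighbourhoods of the three points. -/
def ClosureTriple (x y z : X) : Prop :=
  ∀ V : Set X, IsOpen V → V.Nonempty → closure V ∈ closedNhds x ⊓ closedNhds y ⊓ closedNhds z

theorem tendsto_closedNhds {f : X → Y} (hf : Continuous f) (x : X) :
    Tendsto f (closedNhds x) (closedNhds (f x)) :=
  tendsto_lift'_closure_nhds hf x

theorem ClosureTriple.map {x y z : X} (H : ClosureTriple x y z) (h : X ≃ₜ Y) :
    ClosureTriple (h x) (h y) (h z) := by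
  intro V hV hVne
  have tendsto_symm (u : X) : Tendsto h.symm (closedNhds (h u)) (closedNhds u) := by
    simpa using tendsto_closedNhds h.symm.continuous (h u)
  have hmem := (((tendsto_symm x).inf (tendsto_symm y)).inf (tendsto_symm z))
    (H (h ⁻¹' V) (hV.preimage h.continuous) (hVne.preimage h.surjective))
  simpa [← h.preimage_closure, ← Set.preimage_comp] using hmem

end ClosedNhds

theorem eventually_closedNhds_dvd_or_modEq {p : ℕ} {x : ℕ+} (hp : p.Prime) (hx : ¬ p ∣ x)
    (k : ℕ) : ∀ᶠ w : ℕ+ in closedNhds x, p ∣ w ∨ (w : ℕ) ≡ x [MOD p ^ k] := by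
  have hpk : 0 < p ^ k := pow_pos hp.pos k
  refine (hasBasis_nhds x).lift'_closure.eventually_iff.2
    ⟨p ^ k, ⟨hpk, (hp.coprime_iff_not_dvd.2 hx).symm.pow_right k⟩, fun w hw => ?_⟩
  simpa [hp.factorization_pow] using (mem_closure_golombBasic_iff hpk).1 hw p hp

theorem exists_modEq_imp_of_eventually {p : ℕ} {x : ℕ+} {P : ℕ+ → Prop} (hp : p.Prime)
    (h : ∀ᶠ w in closedNhds x, P w) :
    ∃ m l, ¬ p ∣ m ∧ (p ∣ x → l = 0) ∧ ∀ w : ℕ+, m ∣ w → (w : ℕ) ≡ x [MOD p ^ l] → P w := by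
  obtain ⟨b, ⟨hb, hxb⟩, hbP⟩ := (hasBasis_nhds x).lift'_closure.eventually_iff.1 h
  refine ⟨b / p ^ b.factorization p, b.factorization p, Nat.not_dvd_ordCompl hp hb.ne',
    fun hpx => Nat.factorization_eq_zero_of_not_dvd fun hpb =>
      Nat.not_coprime_of_dvd_of_dvd hp.one_lt hpx hpb hxb, fun w hmw hw => hbP ?_⟩
  rw [mem_closure_golombBasic_iff hb]
  intro q hq
  by_cases hqp : q = p
  · exact .inr (hqp ▸ hw)
  by_cases hqb : q ∣ b
  · refine .inl (dvd_trans ?_ hmw)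
    exact (Nat.dvd_ordCompl_of_dvd_not_dvd hqb
      fun h => hqp ((Nat.prime_dvd_prime_iff_eq hp hq).1 h).symm)
  · exact .inr (by simp [Nat.factorization_eq_zero_of_not_dvd hqb, Nat.modEq_one])

theorem eventually_dvd_of_ne {p : ℕ} {x y : ℕ+} (hp : p.Prime) (hxy : x ≠ y) (hx : ¬ p ∣ x)
    (hy : ¬ p ∣ y) : ∀ᶠ w : ℕ+ in closedNhds x ⊓ closedNhds y, p ∣ w := by
  have lt_pow {u : ℕ+} (hu : u ≤ x + y) : (u : ℕ) < p ^ (x + y : ℕ) :=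
    lt_of_le_of_lt (by exact_mod_cast hu) (Nat.lt_pow_self hp.one_lt)
  filter_upwards [(eventually_closedNhds_dvd_or_modEq hp hx (x + y)).filter_mono inf_le_left,
    (eventually_closedNhds_dvd_or_modEq hp hy (x + y)).filter_mono inf_le_right] with w hwx hwy
  by_contra hpw
  refine hxy (PNat.coe_injective (Nat.ModEq.eq_of_lt_of_lt
    ((hwx.resolve_left hpw).symm.trans (hwy.resolve_left hpw)) (lt_pow ?_) (lt_pow ?_)))
  · exact (PNat.lt_add_right x y).le
  · exact (PNat.lt_add_left y x).le

theorem closureTriple_of_coprime {x y z : ℕ+} (hxy : x ≠ y) (hxz : x ≠ z) (hyz : y ≠ z)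
    (cxy : (x : ℕ).Coprime y) (cxz : (x : ℕ).Coprime z) (cyz : (y : ℕ).Coprime z) :
    ClosureTriple x y z := by
  rintro V hV ⟨a, ha⟩
  obtain ⟨b, hb, -, hbV⟩ := exists_golombBasic_subset hV ha
  have hdvd : ∀ p ∈ b.primeFactors,
      ∀ᶠ w : ℕ+ in closedNhds x ⊓ closedNhds y ⊓ closedNhds z, p ∣ w := by
    intro p hpb
    have hp := Nat.prime_of_mem_primeFactors hpb
    have hno {u v : ℕ} (huv : u.Coprime v) (hu : p ∣ u) : ¬ p ∣ v := fun hv =>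
      Nat.not_coprime_of_dvd_of_dvd hp.one_lt hu hv huv
    by_cases hx : p ∣ (x : ℕ)
    · exact (eventually_dvd_of_ne hp hyz (hno cxy hx) (hno cxz hx)).filter_mono
        (inf_le_inf_right _ inf_le_right)
    by_cases hy : p ∣ (y : ℕ)
    · exact (eventually_dvd_of_ne hp hxz hx (hno cyz hy)).filter_mono
        (inf_le_inf_right _ inf_le_left)
    · exact (eventually_dvd_of_ne hp hxy hx hy).filter_mono inf_le_left
  filter_upwards [(Filter.eventually_all_finset _).2 hdvd] with w hw
  refine closure_mono hbV ((mem_closure_golombBasic_iff hb).2 fun p hp => ?_)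
  by_cases hpb : p ∣ b
  · exact .inl (hw p (Nat.mem_primeFactors.2 ⟨hp, hpb, hb.ne'⟩))
  · exact .inr (by simp [Nat.factorization_eq_zero_of_not_dvd hpb, Nat.modEq_one])

theorem exists_mem_modEq_of_dvd {p c : ℕ} {x y z : ℕ+} {s : Set ℕ+} (hp : p.Prime) (hx : p ∣ x)
    (hy : p ∣ y) (hz : p ∣ z ∨ c = z) (hc : ¬ p ∣ c)
    (hs : s ∈ closedNhds x ⊓ closedNhds y ⊓ closedNhds z) (l : ℕ) :
    ∃ w ∈ s, (w : ℕ) ≡ c [MOD p ^ l] ∧ ¬ p ∣ w := by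
  obtain ⟨S, hS, C, hC, hSC⟩ := Filter.eventually_inf.1 hs
  obtain ⟨A, hA, B, hB, hAB⟩ := Filter.eventually_inf.1 hS
  obtain ⟨a, k, ha, hk, hA'⟩ := exists_modEq_imp_of_eventually hp hA
  obtain ⟨b, k', hb, hk', hB'⟩ := exists_modEq_imp_of_eventually hp hB
  obtain ⟨d, m, hd, hm, hC'⟩ := exists_modEq_imp_of_eventually hp hC
  obtain rfl := hk hx
  obtain rfl := hk' hy
  obtain ⟨w, hw, hwc, hpw⟩ :=
    exists_dvd_modEq hp (hp.not_dvd_mul (hp.not_dvd_mul ha hb) hd) hc (m + l)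
  have hwA : A w := hA' w (((dvd_mul_right _ _).mul_right _).trans hw) (by simp [Nat.modEq_one])
  have hwB : B w := hB' w (((dvd_mul_left _ _).mul_right _).trans hw) (by simp [Nat.modEq_one])
  have hwC : C w := by
    refine hC' w ((dvd_mul_left _ _).trans hw) ?_
    rcases hz with hz | rfl
    · simp [hm hz, Nat.modEq_one]
    · exact hwc.of_dvd (pow_dvd_pow p (Nat.le_add_right m l))
  exact ⟨w, hSC w ⟨hAB w ⟨hwA, hwB⟩, hwC⟩, hwc.of_dvd (pow_dvd_pow p (Nat.le_add_left l m)), hpw⟩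

/-- If `p` divides `x` and `y`, then only `z` constrains the `p`-component of the points which are
close to all three, and a suitable progression modulo `p ^ 2` avoids such a point. -/
theorem ClosureTriple.coprime {x y z : ℕ+} (H : ClosureTriple x y z) : (x : ℕ).Coprime y := by
  refine Nat.coprime_of_dvd fun p hp hpx hpy => ?_
  obtain ⟨c, hpc, hcz⟩ : ∃ c : ℕ, ¬ p ∣ c ∧ (p ∣ z ∨ c = z) := by
    by_cases hz : p ∣ z
    · exact ⟨1, hp.not_dvd_one, .inl hz⟩
    · exact ⟨z, hz, .inr rfl⟩
  have hcp : 0 < c + p := Nat.add_pos_right c hp.pos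
  have hp2 : 0 < p ^ 2 := pow_pos hp.pos 2
  have hV : IsOpen (golombBasic (c + p) (p ^ 2)) := isOpen_golombBasic hcp hp2
    ((hp.coprime_iff_not_dvd.2 (by simpa)).symm.pow_right 2)
  obtain ⟨w, hw, hwc, hpw⟩ := exists_mem_modEq_of_dvd hp hpx hpy hcz hpc
    (H _ hV ⟨⟨c + p, hcp⟩, self_mem_golombBasic ⟨c + p, hcp⟩ _⟩) 2
  have hwcp := ((mem_closure_golombBasic_iff hp2).1 hw p hp).resolve_left hpw
  rw [hp.factorization_pow, Finsupp.single_eq_same] at hwcp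
  have hdvd : p ^ 2 ∣ p := Nat.add_modEq_left_iff.1 (hwcp.symm.trans hwc)
  exact absurd (Nat.le_of_dvd hp.pos hdvd) (by nlinarith [hp.two_le])

theorem coprime_map_of_ne (h : ℕ+ ≃ₜ ℕ+) {x y : ℕ+} (hne : x ≠ y) (hc : (x : ℕ).Coprime y) :
    (h x : ℕ).Coprime (h y) := by
  obtain ⟨q, hq, hqp⟩ := Nat.exists_infinite_primes ((x : ℕ) + y + 1)
  let z : ℕ+ := ⟨q, hqp.pos⟩
  have hz {u : ℕ+} (hu : (u : ℕ) < q) : u ≠ z ∧ (u : ℕ).Coprime z :=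
    ⟨fun h => hu.ne (congrArg PNat.val h),
      (hqp.coprime_iff_not_dvd.2 (Nat.not_dvd_of_pos_of_lt u.pos hu)).symm⟩
  obtain ⟨hxz, cxz⟩ := hz (u := x) (by omega)
  obtain ⟨hyz, cyz⟩ := hz (u := y) (by omega)
  exact ((closureTriple_of_coprime hne hxz hyz hc cxz cyz).map h).coprime

theorem map_one_eq (h : ℕ+ ≃ₜ ℕ+) : h 1 = 1 := by
  by_contra hne
  have h1 : (1 : ℕ+) ≠ h.symm (h 1 * h 1) := fun he =>
    hne (by simpa using (congrArg h he).symm)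
  have hcop := coprime_map_of_ne h h1 (Nat.coprime_one_left _)
  rw [h.apply_symm_apply, PNat.mul_coe] at hcop
  exact hne (PNat.coe_injective ((Nat.coprime_self _).1 hcop.coprime_mul_left_right))

theorem coprime_map (h : ℕ+ ≃ₜ ℕ+) {x y : ℕ+} (hc : (x : ℕ).Coprime y) :
    (h x : ℕ).Coprime (h y) := by
  rcases eq_or_ne x y with rfl | hne
  · have : x = 1 := PNat.coe_injective ((Nat.coprime_self _).1 hc)
    simp [this, map_one_eq]
  · exact coprime_map_of_ne h hne hc

theorem coprime_map_iff (h : ℕ+ ≃ₜ ℕ+) {x y : ℕ+} :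
    (h x : ℕ).Coprime (h y) ↔ (x : ℕ).Coprime y :=
  ⟨fun hc => by simpa using coprime_map h.symm hc, coprime_map h⟩

/-! ### The induced permutation of the primes -/

theorem eq_of_dvd_prime_pow {p q : Nat.Primes} {k : ℕ} (h : (p : ℕ) ∣ q ^ k) : p = q :=
  Nat.Primes.coe_nat_injective (Nat.prime_eq_prime_of_dvd_pow p.2 q.2 h)

theorem exists_eq_prime_pow {n : ℕ} {p : Nat.Primes} (hn : n ≠ 0)
    (h : ∀ q : Nat.Primes, (q : ℕ) ∣ n → q = p) : ∃ k, n = p ^ k :=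
  ⟨_, Nat.eq_prime_pow_of_unique_prime_dvd hn fun {q} hq hqn =>
    congrArg Subtype.val (h ⟨q, hq⟩ hqn)⟩

theorem one_lt_coe_iff {x : ℕ+} : 1 < (x : ℕ) ↔ x ≠ 1 :=
  one_lt_iff_ne_one (a := x)

theorem one_lt_map_iff (h : ℕ+ ≃ₜ ℕ+) {x : ℕ+} : 1 < (h x : ℕ) ↔ 1 < (x : ℕ) := by
  rw [one_lt_coe_iff, one_lt_coe_iff, ← h.injective.ne_iff (x := x), map_one_eq]

/-- The homeomorphism `h` induces the permutation `σ` of the primes if it maps the multiples of `p`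
onto the multiples of `σ p`, for all `p`. -/
def InducesOnPrimes (h : ℕ+ ≃ₜ ℕ+) (σ : Equiv.Perm Nat.Primes) : Prop :=
  ∀ (p : Nat.Primes) (x : ℕ+), (p : ℕ) ∣ x ↔ (σ p : ℕ) ∣ h x

theorem exists_prime_dvd_map_iff (h : ℕ+ ≃ₜ ℕ+) (p : Nat.Primes) :
    ∃ q : Nat.Primes, ∀ x : ℕ+, (p : ℕ) ∣ x ↔ (q : ℕ) ∣ h x := by
  have dvd_iff_not_coprime (q : Nat.Primes) (x : ℕ+) :
      (q : ℕ) ∣ x ↔ ¬ ((q : ℕ+) : ℕ).Coprime x := by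
    rw [Nat.Primes.coe_pnat_nat, q.2.coprime_iff_not_dvd, not_not]
  obtain ⟨q, hqp⟩ : ∃ q : Nat.Primes, (q : ℕ) ∣ h p := by
    obtain ⟨q, hq, hqp⟩ := Nat.exists_prime_and_dvd ((one_lt_map_iff h (x := p)).2 p.2.one_lt).ne'
    exact ⟨⟨q, hq⟩, hqp⟩
  refine ⟨q, fun x => ⟨fun hpx => ?_, fun hqx => ?_⟩⟩
  · have hpq : (p : ℕ) ∣ h.symm q := by
      rw [dvd_iff_not_coprime, ← coprime_map_iff h, h.apply_symm_apply, Nat.coprime_comm,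
        ← dvd_iff_not_coprime]
      exact hqp
    rw [dvd_iff_not_coprime, ← coprime_map_iff h.symm, h.symm_apply_apply]
    exact Nat.not_coprime_of_dvd_of_dvd p.2.one_lt hpq hpx
  · rw [dvd_iff_not_coprime, ← coprime_map_iff h]
    exact Nat.not_coprime_of_dvd_of_dvd q.2.one_lt hqp hqx

theorem exists_inducesOnPrimes (h : ℕ+ ≃ₜ ℕ+) : ∃ σ, InducesOnPrimes h σ := by
  have leftInverse {g : ℕ+ ≃ₜ ℕ+} {σ τ : Nat.Primes → Nat.Primes}
      (hσ : ∀ (p : Nat.Primes) (x : ℕ+), (p : ℕ) ∣ x ↔ (σ p : ℕ) ∣ g x)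
      (hτ : ∀ (p : Nat.Primes) (x : ℕ+), (p : ℕ) ∣ x ↔ (τ p : ℕ) ∣ g.symm x) :
      Function.LeftInverse τ σ := by
    intro p
    have hp : (τ (σ p) : ℕ) ∣ (p : ℕ+) := by
      simpa using (hτ (σ p) (g p)).1 ((hσ p p).1 dvd_rfl)
    exact eq_of_dvd_prime_pow (k := 1) (by rwa [pow_one])
  choose σ hσ using exists_prime_dvd_map_iff h
  choose τ hτ using exists_prime_dvd_map_iff h.symm
  exact ⟨⟨σ, τ, leftInverse hσ hτ, leftInverse hτ hσ⟩, hσ⟩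

namespace InducesOnPrimes

variable {h : ℕ+ ≃ₜ ℕ+} {σ : Equiv.Perm Nat.Primes} {p q r s : Nat.Primes} {k n : ℕ} {x : ℕ+}

theorem symm (H : InducesOnPrimes h σ) : InducesOnPrimes h.symm σ.symm := fun p x => by
  rw [H (σ.symm p), σ.apply_symm_apply, h.apply_symm_apply]

theorem apply_eq_of_map_eq (H : InducesOnPrimes h σ) (hpq : h p = q) : σ p = q := by
  have hdvd : (σ p : ℕ) ∣ h p := (H p p).1 dvd_rfl
  rw [hpq] at hdvd
  exact eq_of_dvd_prime_pow (k := 1) (by rwa [pow_one])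

theorem exists_map_eq_pow (H : InducesOnPrimes h σ) (hx : (x : ℕ) = p ^ k) :
    ∃ l, (h x : ℕ) = σ p ^ l := by
  refine exists_eq_prime_pow (h x).pos.ne' fun q hq => ?_
  rw [← σ.apply_symm_apply q, ← H, hx] at hq
  rw [← eq_of_dvd_prime_pow hq, σ.apply_symm_apply]

/-- The values at `x` and at a `p`-adically close `y` are compared through a point lying in the
closures of Golomb neighbourhoods of both. -/
theorem padic_continuity (H : InducesOnPrimes h σ) (hx : ¬ (p : ℕ) ∣ x) (n : ℕ) :
    ∃ l, ∀ y : ℕ+, (y : ℕ) ≡ x [MOD p ^ l] → (h y : ℕ) ≡ h x [MOD σ p ^ n] := by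
  have eventually_modEq {u : ℕ+} (hu : ¬ (p : ℕ) ∣ u) :
      ∀ᶠ w : ℕ+ in closedNhds u, (p : ℕ) ∣ w ∨ (h w : ℕ) ≡ h u [MOD σ p ^ n] := by
    filter_upwards [(tendsto_closedNhds h.continuous u).eventually
      (eventually_closedNhds_dvd_or_modEq (σ p).2 ((H p u).not.1 hu) n)] with w hw
    rwa [H p w]
  obtain ⟨m, l, hm, -, hl⟩ := exists_modEq_imp_of_eventually p.2 (eventually_modEq hx)
  refine ⟨l + 1, fun y hyx => ?_⟩
  have hy : ¬ (p : ℕ) ∣ y := (dvd_iff_of_modEq_pow l.succ_ne_zero hyx).not.2 hx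
  obtain ⟨m', l', hm', -, hl'⟩ := exists_modEq_imp_of_eventually p.2 (eventually_modEq hy)
  obtain ⟨w, hmw, hwy, hpw⟩ := exists_dvd_modEq p.2 (p.2.not_dvd_mul hm hm') hy (l + l')
  have hwx : (w : ℕ) ≡ x [MOD p ^ l] :=
    (hwy.of_dvd (pow_dvd_pow _ (Nat.le_add_right l l'))).trans
      (hyx.of_dvd (pow_dvd_pow _ l.le_succ))
  exact ((hl' w ((dvd_mul_left _ _).trans hmw)
    (hwy.of_dvd (pow_dvd_pow _ (Nat.le_add_left l' l)))).resolve_left hpw).symm.trans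
    ((hl w ((dvd_mul_right _ _).trans hmw) hwx).resolve_left hpw)

theorem inPowClosure_map (H : InducesOnPrimes h σ) (hsp : s ≠ p) (hsr : InPowClosure p s r) :
    InPowClosure (σ p) (σ s) (σ r) := by
  refine inPowClosure_iff.2 fun n => ?_
  obtain ⟨j, hj⟩ := H.symm.exists_map_eq_pow (p := σ s) (k := 1) (x := σ s) (pow_one _).symm
  rw [σ.symm_apply_apply] at hj
  have hps : ¬ (p : ℕ) ∣ h.symm (σ s) := by
    rw [hj]
    exact fun hdvd => hsp (eq_of_dvd_prime_pow hdvd).symm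
  obtain ⟨l, hl⟩ := H.padic_continuity hps n
  obtain ⟨k, hk⟩ := inPowClosure_iff.1 hsr l
  have hrk : (((r : ℕ+) ^ (k * j) : ℕ+) : ℕ) = r ^ (k * j) := PNat.pow_coe _ _
  have hrs := hl ((r : ℕ+) ^ (k * j)) (by rw [hrk, hj, pow_mul]; exact (hk.pow j).symm)
  obtain ⟨i, hi⟩ := H.exists_map_eq_pow hrk
  rw [h.apply_symm_apply, hi, Nat.Primes.coe_pnat_nat] at hrs
  exact ⟨i, hrs.symm⟩

theorem inPowClosure_map_iff (H : InducesOnPrimes h σ) (hsp : s ≠ p) :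
    InPowClosure (σ p) (σ s) (σ r) ↔ InPowClosure p s r :=
  ⟨fun hsr => by simpa using H.symm.inPowClosure_map (σ.injective.ne hsp) hsr,
    H.inPowClosure_map hsp⟩

/-- The order isomorphism between the primes different from `p` and those different from `σ p`
given by `σ`. -/
def orderIso (H : InducesOnPrimes h σ) (p : Nat.Primes) : PrimesNe p ≃o PrimesNe (σ p) where
  toEquiv := σ.subtypeEquiv fun _ => σ.injective.ne_iff.symm
  map_rel_iff' {s _} := H.inPowClosure_map_iff s.2

theorem apply_eq_two_iff (H : InducesOnPrimes h σ) : (σ p : ℕ) = 2 ↔ (p : ℕ) = 2 :=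
  (eq_two_iff_of_orderIso (H.orderIso p)).symm

/-- Primes are dense in the `p`-adic units, so it is enough to know the values of `σ`. -/
theorem modEq_one_map (H : InducesOnPrimes h σ)
    (hσ : ∀ r, r ≠ p → (r : ℕ) ≡ 1 [MOD p ^ n] → (σ r : ℕ) ≡ 1 [MOD σ p ^ n])
    (hx : (x : ℕ) ≡ 1 [MOD p ^ n]) : (h x : ℕ) ≡ 1 [MOD σ p ^ n] := by
  rcases eq_or_ne n 0 with rfl | hn
  · exact Nat.modEq_one
  have hpx : ¬ (p : ℕ) ∣ x := (dvd_iff_of_modEq_pow hn hx).not.2 p.2.not_dvd_one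
  obtain ⟨l, hl⟩ := H.padic_continuity hpx n
  obtain ⟨⟨r, hrp⟩, hr⟩ := PrimesNe.exists_modEq hpx (l + n)
  have hr1 : (r : ℕ) ≡ 1 [MOD p ^ n] := (hr.of_dvd (pow_dvd_pow _ (Nat.le_add_left n l))).trans hx
  obtain ⟨k, hk⟩ := H.exists_map_eq_pow (p := r) (k := 1) (x := r) (pow_one _).symm
  have hrx := hl r (hr.of_dvd (pow_dvd_pow _ (Nat.le_add_right l n)))
  rw [hk] at hrx
  simpa using hrx.symm.trans ((hσ r hrp hr1).pow k)

theorem pow_dvd_sub_one_iff_of_image (H : InducesOnPrimes h σ)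
    (hn : H.orderIso p '' higherUnits p n = higherUnits (σ p) n) (x : ℕ+) :
    (p : ℕ) ^ n ∣ x - 1 ↔ (σ p : ℕ) ^ n ∣ h x - 1 := by
  have hσ (r : Nat.Primes) (hr : r ≠ p) :
      (σ r : ℕ) ≡ 1 [MOD σ p ^ n] ↔ (r : ℕ) ≡ 1 [MOD p ^ n] := by
    have hmem := (H.orderIso p).injective.mem_set_image (s := higherUnits p n) (a := ⟨r, hr⟩)
    rwa [hn] at hmem
  rw [← Nat.modEq_iff_dvd' x.pos, ← Nat.modEq_iff_dvd' (h x).pos]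
  refine ⟨fun hx => (H.modEq_one_map (fun r hr => (hσ r hr).2) hx.symm).symm, fun hx => ?_⟩
  have hsymm := H.symm.modEq_one_map (p := σ p) (n := n) (fun r hr hr1 => ?_) hx.symm
  · simpa using hsymm.symm
  · rw [σ.symm_apply_apply, ← hσ _ fun he => hr (by rw [← he, σ.apply_symm_apply]),
      σ.apply_symm_apply]
    exact hr1

theorem pow_dvd_sub_one_iff_of_ne_two (H : InducesOnPrimes h σ) (hn : (p : ℕ) ≠ 2 ∨ n ≠ 2)
    (x : ℕ+) : (p : ℕ) ^ n ∣ x - 1 ↔ (σ p : ℕ) ^ n ∣ h x - 1 :=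
  H.pow_dvd_sub_one_iff_of_image (image_higherUnits _ hn) x

theorem exists_map_eq_one_add_pow (H : InducesOnPrimes h σ) (hx : (x : ℕ) = 1 + p ^ k) :
    ∃ l, (h x : ℕ) = 1 + σ p ^ l ∧ ∀ n, (p : ℕ) ≠ 2 ∨ n ≠ 2 → (n ≤ k ↔ n ≤ l) := by
  have hx1 : (x : ℕ) - 1 = p ^ k := by omega
  have hhx := (one_lt_map_iff h).2 (hx ▸ lt_add_of_pos_right 1 (pow_pos p.2.pos k))
  obtain ⟨l, hl⟩ : ∃ l, (h x : ℕ) - 1 = σ p ^ l := by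
    refine exists_eq_prime_pow (Nat.sub_ne_zero_of_lt hhx) fun q hq => ?_
    have hdvd := H.pow_dvd_sub_one_iff_of_ne_two (p := σ.symm q) (n := 1) (.inr (by simp)) x
    rw [σ.apply_symm_apply, pow_one, pow_one, hx1] at hdvd
    rw [← eq_of_dvd_prime_pow (hdvd.2 hq), σ.apply_symm_apply]
  refine ⟨l, by omega, fun n hn => ?_⟩
  rw [← Nat.pow_dvd_pow_iff_le_right p.2.one_lt, ← hx1, H.pow_dvd_sub_one_iff_of_ne_two hn, hl,
    Nat.pow_dvd_pow_iff_le_right (σ p).2.one_lt]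

theorem map_three_or_five (H : InducesOnPrimes h σ) (hx : x = 3 ∨ x = 5) : h x = 3 ∨ h x = 5 := by
  let two : Nat.Primes := ⟨2, Nat.prime_two⟩
  have hσ : (σ two : ℕ) = 2 := H.apply_eq_two_iff.2 rfl
  obtain ⟨k, hk, hk12⟩ : ∃ k, (x : ℕ) = 1 + two ^ k ∧ (k = 1 ∨ k = 2) := by
    rcases hx with rfl | rfl
    · exact ⟨1, rfl, .inl rfl⟩
    · exact ⟨2, rfl, .inr rfl⟩
  obtain ⟨l, hl, hkl⟩ := H.exists_map_eq_one_add_pow hk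
  have h1 := hkl 1 (.inr (by simp))
  have h3 := hkl 3 (.inr (by simp))
  obtain rfl | rfl : l = 1 ∨ l = 2 := by omega
  · exact .inl (PNat.coe_injective (by rw [hl, hσ]; rfl))
  · exact .inr (PNat.coe_injective (by rw [hl, hσ]; rfl))

/-- If `h 3 = 5`, then `h 4 - 1` is `5`, whereas `h 4` is a power of `2`. -/
theorem map_three (H : InducesOnPrimes h σ) : h 3 = 3 := by
  refine (H.map_three_or_five (.inl rfl)).resolve_right fun h35 => ?_
  let two : Nat.Primes := ⟨2, Nat.prime_two⟩
  let three : Nat.Primes := ⟨3, Nat.prime_three⟩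
  have hσ : σ three = ⟨5, Nat.prime_five⟩ := H.apply_eq_of_map_eq h35
  obtain ⟨l, hl, hl1⟩ := H.exists_map_eq_one_add_pow (p := three) (k := 1) (x := 4) rfl
  obtain rfl : l = 1 := by
    have := hl1 1 (.inl (by simp [three]))
    have := hl1 2 (.inl (by simp [three]))
    omega
  obtain ⟨k, hk⟩ := H.exists_map_eq_pow (p := two) (k := 2) (x := 4) rfl
  rw [H.apply_eq_two_iff.2 rfl, hl, hσ] at hk
  have h3 : 3 ∣ 2 ^ k := ⟨2, hk.symm⟩
  exact absurd (Nat.prime_three.dvd_of_dvd_pow h3) (by decide)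

theorem map_five (H : InducesOnPrimes h σ) : h 5 = 5 :=
  (H.map_three_or_five (.inr rfl)).resolve_left fun h53 =>
    absurd (h.injective (h53.trans H.map_three.symm)) (by decide)

theorem pow_dvd_sub_one_iff (H : InducesOnPrimes h σ) (p : Nat.Primes) (n : ℕ) (x : ℕ+) :
    (p : ℕ) ^ n ∣ x - 1 ↔ (σ p : ℕ) ^ n ∣ h x - 1 := by
  by_cases hn : (p : ℕ) ≠ 2 ∨ n ≠ 2
  · exact H.pow_dvd_sub_one_iff_of_ne_two hn x
  obtain ⟨hp, rfl⟩ : (p : ℕ) = 2 ∧ n = 2 := by tauto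
  let five : Nat.Primes := ⟨5, Nat.prime_five⟩
  have hfive : five ≠ p := fun he => by simp [← he, five] at hp
  have hσ : σ five = five := H.apply_eq_of_map_eq H.map_five
  exact H.pow_dvd_sub_one_iff_of_image
    (image_higherUnits_two_of_five _ hp (r := ⟨five, hfive⟩) rfl (congrArg Subtype.val hσ)) x

end InducesOnPrimes

theorem eq_of_pow_dvd_iff {a b : ℕ} {σ : Equiv.Perm Nat.Primes}
    (h : ∀ (p : Nat.Primes) (n : ℕ), (p : ℕ) ^ n ∣ a ↔ (σ p : ℕ) ^ n ∣ b)
    (hσ : ∀ p : Nat.Primes, (p : ℕ) ∣ a → σ p = p) : a = b := by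
  have fixed_of_dvd (p : Nat.Primes) (hp : (p : ℕ) ∣ b) : σ p = p := by
    have hfix := hσ (σ.symm p) (by simpa using (h (σ.symm p) 1).2 (by simpa using hp))
    simpa using congrArg σ hfix
  refine Nat.dvd_antisymm ?_ ?_
  · rw [Nat.dvd_iff_prime_pow_dvd_dvd]
    intro p n hp hpn
    rcases eq_or_ne n 0 with rfl | hn
    · simp
    simpa [hσ ⟨p, hp⟩ ((dvd_pow_self p hn).trans hpn)] using (h ⟨p, hp⟩ n).1 hpn
  · rw [Nat.dvd_iff_prime_pow_dvd_dvd]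
    intro p n hp hpn
    rcases eq_or_ne n 0 with rfl | hn
    · simp
    refine (h ⟨p, hp⟩ n).2 ?_
    rwa [fixed_of_dvd ⟨p, hp⟩ ((dvd_pow_self p hn).trans hpn)]

end GolombRigid

open GolombRigid in
/-- The Golomb space is topologically rigid: every self-homeomorphism is the identity. -/
theorem golomb_rigid (h : ℕ+ ≃ₜ ℕ+) : ∀ x : ℕ+, h x = x := by
  obtain ⟨σ, H⟩ := exists_inducesOnPrimes h
  intro x
  induction x using PNat.strongInductionOn with
  | _ x ih =>
    rcases eq_or_ne x 1 with rfl | hx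
    · exact map_one_eq h
    have hx1 : 1 < (x : ℕ) := one_lt_coe_iff.2 hx
    have hσ (p : Nat.Primes) (hp : (p : ℕ) ∣ x - 1) : σ p = p := by
      have hle := Nat.le_of_dvd (Nat.sub_pos_of_lt hx1) hp
      have hpx : (p : ℕ+) < x := by rw [← PNat.coe_lt_coe, Nat.Primes.coe_pnat_nat]; omega
      exact H.apply_eq_of_map_eq (ih p hpx)
    have hsub := eq_of_pow_dvd_iff (fun p n => H.pow_dvd_sub_one_iff p n x) hσ
    have hhx1 := (one_lt_map_iff h).2 hx1
    exact PNat.coe_injective (by omega)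
end

section
/- For any a,b ∈ ℕ, the closure of the arithmetic progression a+bℕ₀ in the Golomb space ℕ_τ equals ℕ ∩ ⋂_{p ∈ Π_b} ( pℕ ∪ (a + p^{l_p(b)}ℤ) ), where the intersection is over all prime divisors p of b. -/
/-!
The progressions `x + cℕ₀` with `c` coprime to `x` form a neighbourhood base at `x`, and by the
Chinese remainder theorem `x + cℕ₀` meets `a + bℕ₀` iff `x ≡ a` modulo `gcd(c, b)`. As `c` varies,
`gcd(c, b)` runs through the divisors of `b` coprime to `x`, so `x` is in the closure of `a + bℕ₀`
iff `x ≡ a` modulo each of these divisors. It is enough to test this on the maximal prime powers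
`p ^ l_p(b)` with `p ∤ x`.
-/

open TopologicalSpace

theorem mem_golombBasic_iff {a b : ℕ} {y : ℕ+} :
    y ∈ golombBasic a b ↔ a ≤ y ∧ (y : ℕ) ≡ a [MOD b] := by
  constructor
  · rintro ⟨n, hn⟩
    simp [hn, Nat.ModEq]
  · rintro ⟨hay, hmod⟩
    obtain ⟨n, hn⟩ := (Nat.modEq_iff_dvd' hay).1 hmod.symm
    exact ⟨n, by omega⟩

theorem self_mem_golombBasic (x : ℕ+) (c : ℕ) : x ∈ golombBasic x c :=
  ⟨0, by simp⟩

theorem golombBasic_subset_of_mem_of_dvd {a b d : ℕ} {x : ℕ+} (hx : x ∈ golombBasic a b)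
    (hbd : b ∣ d) : golombBasic x d ⊆ golombBasic a b := by
  intro y hy
  rw [mem_golombBasic_iff] at hx hy ⊢
  exact ⟨hx.1.trans hy.1, (hy.2.of_dvd hbd).trans hx.2⟩

theorem coprime_of_mem_golombBasic {a b : ℕ} {x : ℕ+} (hx : x ∈ golombBasic a b)
    (hab : Nat.Coprime a b) : Nat.Coprime x b :=
  (mem_golombBasic_iff.1 hx).2.gcd_eq.trans hab

theorem golombBasic_inter_nonempty_iff {a b c d : ℕ} (hb : 0 < b) (hd : 0 < d) :
    (golombBasic a b ∩ golombBasic c d).Nonempty ↔ a ≡ c [MOD b.gcd d] := by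
  constructor
  · rintro ⟨y, hyab, hycd⟩
    have hya := (mem_golombBasic_iff.1 hyab).2.of_dvd (Nat.gcd_dvd_left b d)
    have hyc := (mem_golombBasic_iff.1 hycd).2.of_dvd (Nat.gcd_dvd_right b d)
    exact hya.symm.trans hyc
  · intro h
    obtain ⟨k, hka, hkc⟩ := Nat.chineseRemainder' h
    -- The Chinese remainder `k` may be smaller than `a` or `c`, or even `0`.
    let y := k + b * d * (a + c + 1)
    have hy : a + c + 1 ≤ y :=
      (Nat.le_mul_of_pos_left _ (Nat.mul_pos hb hd)).trans (Nat.le_add_left _ _)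
    have hya : y ≡ a [MOD b] := by simpa [y, Nat.ModEq, mul_assoc] using hka
    have hyc : y ≡ c [MOD d] := by simpa [y, Nat.ModEq, mul_assoc, mul_left_comm b d] using hkc
    refine ⟨⟨y, by omega⟩, mem_golombBasic_iff.2 ⟨?_, hya⟩, mem_golombBasic_iff.2 ⟨?_, hyc⟩⟩ <;>
      rw [PNat.mk_coe] <;> omega

theorem isTopologicalBasis_golombBasic :
    IsTopologicalBasis
      {S : Set ℕ+ | ∃ a b : ℕ, 0 < a ∧ 0 < b ∧ Nat.Coprime a b ∧ S = golombBasic a b} where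
  exists_subset_inter := by
    rintro _ ⟨a, b, -, hb, hab, rfl⟩ _ ⟨c, d, -, hd, hcd, rfl⟩ x ⟨hxab, hxcd⟩
    have hx : Nat.Coprime x (b * d) :=
      (coprime_of_mem_golombBasic hxab hab).mul_right (coprime_of_mem_golombBasic hxcd hcd)
    exact ⟨golombBasic x (b * d), ⟨x, b * d, x.pos, Nat.mul_pos hb hd, hx, rfl⟩,
      self_mem_golombBasic x _,
      Set.subset_inter (golombBasic_subset_of_mem_of_dvd hxab (dvd_mul_right b d))
        (golombBasic_subset_of_mem_of_dvd hxcd (dvd_mul_left d b))⟩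
  sUnion_eq := Set.sUnion_eq_univ_iff.2 fun x =>
    ⟨golombBasic x 1, ⟨x, 1, x.pos, one_pos, Nat.coprime_one_right _, rfl⟩,
      self_mem_golombBasic x 1⟩
  eq_generateFrom := rfl

theorem nhds_hasBasis_golombBasic (x : ℕ+) :
    (nhds x).HasBasis (fun c : ℕ => 0 < c ∧ Nat.Coprime x c) (golombBasic x) := by
  refine ⟨fun U => isTopologicalBasis_golombBasic.mem_nhds_iff.trans ⟨?_, ?_⟩⟩
  · rintro ⟨_, ⟨a, b, -, hb, hab, rfl⟩, hx, hU⟩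
    exact ⟨b, ⟨hb, coprime_of_mem_golombBasic hx hab⟩,
      (golombBasic_subset_of_mem_of_dvd hx dvd_rfl).trans hU⟩
  · rintro ⟨c, ⟨hc, hxc⟩, hU⟩
    exact ⟨golombBasic x c, ⟨x, c, x.pos, hc, hxc, rfl⟩, self_mem_golombBasic x c, hU⟩

theorem mem_closure_golombBasic_iff {a b : ℕ} (hb : 0 < b) {x : ℕ+} :
    x ∈ closure (golombBasic a b) ↔ ∀ d : ℕ, d ∣ b → Nat.Coprime x d → (x : ℕ) ≡ a [MOD d] := by
  rw [mem_closure_iff_nhds_basis' (nhds_hasBasis_golombBasic x)]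
  constructor
  · intro h d hdb hxd
    have hd : 0 < d := Nat.pos_of_dvd_of_pos hdb hb
    simpa [Nat.gcd_eq_left hdb] using (golombBasic_inter_nonempty_iff hd hb).1 (h d ⟨hd, hxd⟩)
  · rintro h c ⟨hc, hxc⟩
    exact (golombBasic_inter_nonempty_iff hc hb).2
      (h _ (Nat.gcd_dvd_right c b) (hxc.coprime_dvd_right (Nat.gcd_dvd_left c b)))

theorem modEq_of_forall_prime_pow_dvd {d m n : ℕ}
    (h : ∀ p k : ℕ, p.Prime → p ^ k ∣ d → m ≡ n [MOD p ^ k]) : m ≡ n [MOD d] := by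
  rw [Nat.modEq_iff_dvd, Int.natCast_dvd, Nat.dvd_iff_prime_pow_dvd_dvd]
  exact fun p k hp hk => Int.natCast_dvd.1 (Nat.modEq_iff_dvd.1 (h p k hp hk))

theorem forall_dvd_coprime_modEq_iff {b m n : ℕ} (hb : b ≠ 0) :
    (∀ d : ℕ, d ∣ b → Nat.Coprime m d → m ≡ n [MOD d]) ↔
      ∀ p : ℕ, p.Prime → p ∣ b → ¬ p ∣ m → m ≡ n [MOD p ^ b.factorization p] := by
  constructor
  · intro h p hp _ hpm
    exact h _ (Nat.ordProj_dvd b p) (((hp.coprime_iff_not_dvd.2 hpm).symm).pow_right _)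
  · intro h d hdb hmd
    refine modEq_of_forall_prime_pow_dvd fun p k hp hk => ?_
    obtain rfl | hk0 := eq_or_ne k 0
    · simpa using Nat.modEq_one
    have hpd : p ∣ d := (dvd_pow_self p hk0).trans hk
    have hpm : ¬ p ∣ m := fun hpm => Nat.not_coprime_of_dvd_of_dvd hp.one_lt hpm hpd hmd
    have hle : k ≤ b.factorization p := (hp.pow_dvd_iff_le_factorization hb).1 (hk.trans hdb)
    exact (h p hp (hpd.trans hdb) hpm).of_dvd (pow_dvd_pow p hle)

/-- The closure of the arithmetic progression `a + bℕ₀` in the Golomb space equals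
`ℕ ∩ ⋂_{p ∈ Π_b} (pℕ ∪ (a + p^{l_p(b)}ℤ))`. -/
theorem golomb_closure_progression (a b : ℕ) (ha : 0 < a) (hb : 0 < b) :
    closure (golombBasic a b) =
      {x : ℕ+ | ∀ p : ℕ, p.Prime → p ∣ b →
        p ∣ (x : ℕ) ∨ (x : ℕ) ≡ a [MOD p ^ (b.factorization p)]} := by
  ext x
  rw [mem_closure_golombBasic_iff hb, forall_dvd_coprime_modEq_iff hb.ne']
  simp only [Set.mem_ofPred_eq, or_iff_not_imp_left]
end

section
/- For any homeomorphism h : ℕ_τ → ℕ_τ of the Golomb space and any prime number p, one has h(pℕ) = h(p)ℕ; consequently h restricts to a homeomorphism of the subspace ℕ_τ \ pℕ onto the subspace ℕ_τ \ h(p)ℕ. -/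
open TopologicalSpace

/-!
By the Chinese remainder theorem, `t` lies in the closure of `x + bℕ₀` iff `t ≡ x` modulo every
divisor of `b` coprime to `t`. So the filter `𝓕 x` generated by the closures of the neighbourhoods
of `x` records congruences to `x` modulo powers of primes `q ∤ x`, imposed on those `t` with
`q ∤ t`. Inequalities `𝓕 x ⊓ 𝓕 z ≤ 𝓕 y` are preserved by homeomorphisms, and they yield two
invariants. If `x ≠ 1` and `𝓕 x ⊓ 𝓕 z ≤ 𝓕 1`, then `z = 1`, while `𝓕 1 ⊓ 𝓕 (y ^ 2) ≤ 𝓕 y` for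
`y ≠ 1`; hence `h 1 = 1`. For `y, z ≠ 1`, `𝓕 1 ⊓ 𝓕 z ≤ 𝓕 y` iff all prime divisors of `z` divide
`y`; hence `h` preserves inclusions between sets of prime divisors.

It remains to see that `h p` is prime. Let `q` be a prime divisor of `h p`; then `h p = q ^ k` and
`h (p ^ j) = q` for some `k, j ≥ 1`. The map `f s = h⁻¹ (h s ^ k)` is continuous, sends `p ^ j` to
`p`, and sends each prime `s` to a power of `s`. Dirichlet's theorem says that the primes are dense
in the Golomb space, so `f x` is congruent to a power of `x` modulo every `b` coprime to `x` and
`f x`. For `x = p ^ j` and `b = p ^ j - 1` this reads `p ≡ 1`, whence `j = 1`.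
-/

open Filter Topology

section ClosureNhds

variable {X Y : Type*} [TopologicalSpace X] [TopologicalSpace Y]

/-- The filter `𝓕 x` generated by the closures of the neighbourhoods of `x`. It is coarser than
`𝓝 x`, and equal to it when the space is regular, which the Golomb space is not. -/
def closureNhds (x : X) : Filter X := (𝓝 x).lift' closure

lemma map_closureNhds (h : X ≃ₜ Y) (x : X) : map h (closureNhds x) = closureNhds (h x) := by
  rw [closureNhds, closureNhds, ← h.map_nhds_eq,
    h.isClosedMap.lift'_closure_map_eq h.continuous]

lemma closureNhds_inf_le_map_iff (h : X ≃ₜ Y) {x y z : X} :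
    closureNhds (h x) ⊓ closureNhds (h z) ≤ closureNhds (h y) ↔
      closureNhds x ⊓ closureNhds z ≤ closureNhds y := by
  simp only [← map_closureNhds, ← map_inf h.injective, map_le_map_iff h.injective]

end ClosureNhds

section Arithmetic

lemma eq_of_modEq_pow_add {a b g : ℕ} (hg : 1 < g) (h : a ≡ b [MOD g ^ (a + b)]) : a = b :=
  have hlt : a + b < g ^ (a + b) := Nat.lt_pow_self hg
  h.eq_of_lt_of_lt (by lia) (by lia)

lemma coprime_of_primeFactors_subset {y z c : ℕ} (hz : z ≠ 0)
    (h : z.primeFactors ⊆ y.primeFactors) (hyc : y.Coprime c) : z.Coprime c :=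
  Nat.coprime_of_dvd fun _ hq hqz hqc => Nat.not_coprime_of_dvd_of_dvd hq.one_lt
    (Nat.dvd_of_mem_primeFactors (h (hq.mem_primeFactors hqz hz))) hqc hyc

lemma dvd_iff_primeFactors_subset {p n : ℕ} (hp : p.Prime) (hn : n ≠ 0) :
    p ∣ n ↔ p.primeFactors ⊆ n.primeFactors := by
  simp [hp, hn]

lemma exists_eq_pow_of_primeFactors_eq_singleton {n p : ℕ} (h : n.primeFactors = {p}) :
    ∃ k ≠ 0, n = p ^ k := by
  obtain ⟨r, k, hr, hk, rfl⟩ := (isPrimePow_nat_iff n).1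
    (isPrimePow_iff_card_primeFactors_eq_one.2 (by rw [h, Finset.card_singleton]))
  rw [Nat.primeFactors_prime_pow hk.ne' hr, Finset.singleton_inj] at h
  exact ⟨k, hk.ne', by rw [h]⟩

lemma le_one_of_modEq_one_pow_sub_one {p j : ℕ} (hp : 1 < p)
    (h : p ≡ 1 [MOD p ^ j - 1]) : j ≤ 1 := by
  have hle : p ^ j - 1 ≤ p - 1 :=
    Nat.le_of_dvd (by lia) ((Nat.modEq_iff_dvd' hp.le).1 h.symm)
  have hpow : p ^ j ≤ p ^ 1 := by rw [pow_one]; lia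
  exact (Nat.pow_le_pow_iff_right hp).1 hpow

/-- Making `t` a multiple of the part of `M` prime to `q` leaves only powers of `q` among the
divisors of `M` coprime to `t`. -/
lemma exists_not_dvd_and_modEq_of_coprime {q w M : ℕ} (hq : q.Prime) (hw : ¬ q ∣ w) (hM : M ≠ 0) :
    ∃ t : ℕ, ¬ q ∣ t ∧ ∀ g, g ∣ M → g.Coprime t → t ≡ w [MOD g] ∧ ∃ m, g ∣ q ^ m := by
  obtain ⟨m, M', hM', rfl⟩ := Nat.exists_eq_pow_mul_and_not_dvd hM q hq.ne_one
  obtain ⟨t, htw, ht0⟩ := Nat.chineseRemainder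
    ((hq.coprime_iff_not_dvd.2 hM').pow_left (m + 1)) w 0
  have hqt : ¬ q ∣ t := (htw.dvd_iff (dvd_pow_self q m.succ_ne_zero)).not.2 hw
  refine ⟨t, hqt, fun g hg hgt => ?_⟩
  have hgq : g ∣ q ^ m :=
    (hgt.coprime_dvd_right (Nat.modEq_zero_iff_dvd.1 ht0)).dvd_of_dvd_mul_right hg
  exact ⟨htw.of_dvd (hgq.trans (pow_dvd_pow q m.le_succ)), m, hgq⟩

end Arithmetic

namespace GolombSpace

section Topology

lemma mem_golombBasic_iff {a b : ℕ} {x : ℕ+} :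
    x ∈ golombBasic a b ↔ a ≤ x ∧ a ≡ x [MOD b] := by
  constructor
  · rintro ⟨n, hn⟩
    have hle : a ≤ x := hn ▸ Nat.le_add_right _ _
    exact ⟨hle, (Nat.modEq_iff_exists_eq_add hle).2 ⟨n, hn⟩⟩
  · rintro ⟨hle, hmod⟩
    exact (Nat.modEq_iff_exists_eq_add hle).1 hmod

lemma golombBasic_subset {a b c d : ℕ} (hac : a ≤ c) (hmod : a ≡ c [MOD b]) (hbd : b ∣ d) :
    golombBasic c d ⊆ golombBasic a b := fun _ hy =>
  have ⟨hle, hy⟩ := mem_golombBasic_iff.1 hy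
  mem_golombBasic_iff.2 ⟨hac.trans hle, hmod.trans (hy.of_dvd hbd)⟩

lemma golombBasic_inter_nonempty_iff {a b d e : ℕ} (hd : 0 < d) (he : 0 < e) :
    (golombBasic a d ∩ golombBasic b e).Nonempty ↔ a ≡ b [MOD d.gcd e] := by
  constructor
  · rintro ⟨y, hyd, hye⟩
    exact ((mem_golombBasic_iff.1 hyd).2.of_dvd (Nat.gcd_dvd_left d e)).trans
      ((mem_golombBasic_iff.1 hye).2.of_dvd (Nat.gcd_dvd_right d e)).symm
  · intro h
    obtain ⟨k, hkd, hke⟩ := Nat.chineseRemainder' h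
    have hlarge : a + b + 1 ≤ d * e * (a + b + 1) := Nat.le_mul_of_pos_left _ (by positivity)
    refine ⟨⟨k + d * e * (a + b + 1), by lia⟩, mem_golombBasic_iff.2 ⟨?_, hkd.symm.trans ?_⟩,
      mem_golombBasic_iff.2 ⟨?_, hke.symm.trans ?_⟩⟩ <;> rw [PNat.mk_coe]
    · lia
    · simp [Nat.ModEq, mul_assoc]
    · lia
    · simp [Nat.ModEq, mul_assoc, mul_left_comm d]

lemma exists_golombBasic_subset {U : Set ℕ+} (hU : IsOpen U) {x : ℕ+} (hx : x ∈ U) :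
    ∃ b : ℕ, (0 < b ∧ (x : ℕ).Coprime b) ∧ golombBasic x b ⊆ U := by
  induction hU with
  | basic s hs =>
    obtain ⟨a, b, -, hb, hab, rfl⟩ := hs
    obtain ⟨hle, hmod⟩ := mem_golombBasic_iff.1 hx
    exact ⟨b, ⟨hb, by rwa [Nat.Coprime, ← hmod.gcd_eq]⟩, golombBasic_subset hle hmod dvd_rfl⟩
  | univ => exact ⟨1, ⟨one_pos, Nat.coprime_one_right _⟩, Set.subset_univ _⟩
  | inter s t _ _ ihs iht =>
    obtain ⟨b, ⟨hb, hxb⟩, hs⟩ := ihs hx.1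
    obtain ⟨c, ⟨hc, hxc⟩, ht⟩ := iht hx.2
    exact ⟨b * c, ⟨Nat.mul_pos hb hc, hxb.mul_right hxc⟩, Set.subset_inter
      ((golombBasic_subset le_rfl rfl (dvd_mul_right b c)).trans hs)
      ((golombBasic_subset le_rfl rfl (dvd_mul_left c b)).trans ht)⟩
  | sUnion S _ ih =>
    obtain ⟨s, hs, hxs⟩ := hx
    obtain ⟨b, hb, hsub⟩ := ih s hs hxs
    exact ⟨b, hb, hsub.trans (Set.subset_sUnion_of_mem hs)⟩

lemma hasBasis_nhds (x : ℕ+) :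
    (𝓝 x).HasBasis (fun b : ℕ => 0 < b ∧ (x : ℕ).Coprime b) (fun b => golombBasic x b) := by
  refine hasBasis_iff.2 fun s => mem_nhds_iff.trans ⟨?_, ?_⟩
  · rintro ⟨U, hUs, hU, hx⟩
    obtain ⟨b, hb, hsub⟩ := exists_golombBasic_subset hU hx
    exact ⟨b, hb, hsub.trans hUs⟩
  · rintro ⟨b, ⟨hb, hxb⟩, hsub⟩
    exact ⟨golombBasic x b, hsub, isOpen_generateFrom_of_mem ⟨x, b, x.pos, hb, hxb, rfl⟩,
      mem_golombBasic_iff.2 ⟨le_rfl, rfl⟩⟩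

lemma eventually_nhds_modEq {x : ℕ+} {b : ℕ} (hb : 0 < b) (hxb : (x : ℕ).Coprime b) :
    ∀ᶠ t : ℕ+ in 𝓝 x, (x : ℕ) ≡ t [MOD b] :=
  (hasBasis_nhds x).eventually_iff.2 ⟨b, ⟨hb, hxb⟩, fun _ ht => (mem_golombBasic_iff.1 ht).2⟩

instance : ContinuousMul ℕ+ where
  continuous_mul := continuous_iff_continuousAt.2 fun ⟨x, y⟩ => by
    rw [ContinuousAt, nhds_prod_eq, ((hasBasis_nhds x).prod (hasBasis_nhds y)).tendsto_iff
      (hasBasis_nhds (x * y))]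
    rintro b ⟨hb, hxyb⟩
    rw [PNat.mul_coe, Nat.coprime_mul_iff_left] at hxyb
    refine ⟨(b, b), ⟨⟨hb, hxyb.1⟩, hb, hxyb.2⟩, fun ⟨u, v⟩ ⟨hu, hv⟩ => ?_⟩
    obtain ⟨hxu, hu⟩ := mem_golombBasic_iff.1 hu
    obtain ⟨hyv, hv⟩ := mem_golombBasic_iff.1 hv
    exact mem_golombBasic_iff.2 ⟨Nat.mul_le_mul hxu hyv, hu.mul hv⟩

lemma dense_primes : Dense {s : ℕ+ | (s : ℕ).Prime} := fun x => by
  refine (mem_closure_iff_nhds_basis (hasBasis_nhds x)).2 fun b ⟨hb, hxb⟩ => ?_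
  obtain ⟨s, hxs, hs, hmod⟩ := Nat.forall_exists_prime_gt_and_modEq (x : ℕ) hb.ne' hxb
  exact ⟨⟨s, hs.pos⟩, hs, mem_golombBasic_iff.2 ⟨hxs.le, hmod.symm⟩⟩

lemma exists_modEq_pow_of_continuousAt {f : ℕ+ → ℕ+} {x : ℕ+} (hf : ContinuousAt f x)
    (hpow : ∀ s : ℕ+, (s : ℕ).Prime → ∃ i, f s = s ^ i) {b : ℕ} (hb : 0 < b)
    (hxb : (x : ℕ).Coprime b) (hfxb : (f x : ℕ).Coprime b) :
    ∃ i, (f x : ℕ) ≡ (x : ℕ) ^ i [MOD b] := by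
  obtain ⟨s, hs, hxs, hfxs⟩ := ((mem_closure_iff_frequently.1 (dense_primes x)).and_eventually
    ((eventually_nhds_modEq hb hxb).and (hf.eventually (eventually_nhds_modEq hb hfxb)))).exists
  obtain ⟨i, hi⟩ := hpow s hs
  rw [hi, PNat.pow_coe] at hfxs
  exact ⟨i, hfxs.trans (hxs.pow i).symm⟩

end Topology

section Closures

lemma mem_closure_golombBasic_iff {a d : ℕ} (hd : 0 < d) {t : ℕ+} :
    t ∈ closure (golombBasic a d) ↔ ∀ g, g ∣ d → g.Coprime t → (t : ℕ) ≡ a [MOD g] := by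
  simp only [mem_closure_iff_nhds_basis' (hasBasis_nhds t), and_imp]
  constructor
  · intro h g hgd hgt
    have hg : 0 < g := Nat.pos_of_dvd_of_pos hgd hd
    have hmod := (golombBasic_inter_nonempty_iff hg hd).1 (h g hg hgt.symm)
    rwa [Nat.gcd_eq_left hgd] at hmod
  · intro h e he hte
    exact (golombBasic_inter_nonempty_iff he hd).2
      (h _ (Nat.gcd_dvd_right e d) (hte.symm.coprime_dvd_left (Nat.gcd_dvd_left e d)))

lemma hasBasis_closureNhds (x : ℕ+) :
    (closureNhds x).HasBasis (fun b : ℕ => 0 < b ∧ (x : ℕ).Coprime b)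
      (fun b => {t : ℕ+ | ∀ g, g ∣ b → g.Coprime t → (t : ℕ) ≡ x [MOD g]}) :=
  (hasBasis_nhds x).lift'_closure.congr (fun _ => Iff.rfl)
    fun _ hb => Set.ext fun _ => mem_closure_golombBasic_iff hb.1

lemma eventually_closureNhds_modEq {x : ℕ+} {b : ℕ} (hb : 0 < b) (hxb : (x : ℕ).Coprime b) :
    ∀ᶠ t : ℕ+ in closureNhds x, ∀ g, g ∣ b → g.Coprime t → (t : ℕ) ≡ x [MOD g] :=
  (hasBasis_closureNhds x).mem_of_mem ⟨hb, hxb⟩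

lemma frequently_closureNhds_inf_modEq {x z : ℕ+} {q w : ℕ} (hq : q.Prime) (hqw : ¬ q ∣ w)
    (hx : q ∣ x ∨ w = x) (hz : q ∣ z ∨ w = z) (n : ℕ) :
    ∃ᶠ t : ℕ+ in closureNhds x ⊓ closureNhds z, q.Coprime t ∧ (t : ℕ) ≡ w [MOD q ^ n] := by
  rw [((hasBasis_closureNhds x).inf (hasBasis_closureNhds z)).frequently_iff]
  rintro ⟨B, C⟩ ⟨⟨hB, hxB⟩, hC, hzC⟩
  have hM : q ^ n * (B * C) ≠ 0 := by have := hq.pos; positivity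
  obtain ⟨t, hqt, ht⟩ := exists_not_dvd_and_modEq_of_coprime hq hqw hM
  have hcop : q.Coprime t := hq.coprime_iff_not_dvd.2 hqt
  have hmodEq {u : ℕ+} {D : ℕ} (hu : q ∣ u ∨ w = u) (huD : (u : ℕ).Coprime D)
      (hD : D ∣ B * C) : ∀ g, g ∣ D → g.Coprime t → t ≡ u [MOD g] := fun g hgD hgt => by
    obtain ⟨hgw, m, hgm⟩ := ht g ((hgD.trans hD).mul_left _) hgt
    obtain hqu | rfl := hu
    · have hgq : g.Coprime (q ^ m) :=
        (((huD.coprime_dvd_left hqu).coprime_dvd_right hgD).symm).pow_right m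
      rw [hgq.eq_one_of_dvd hgm]
      exact Nat.modEq_one
    · exact hgw
  exact ⟨⟨t, Nat.pos_of_ne_zero fun h => hqt (h ▸ dvd_zero q)⟩,
    ⟨hmodEq hx hxB (dvd_mul_right B C), hmodEq hz hzC (dvd_mul_left C B)⟩,
    hcop, (ht _ (dvd_mul_right _ _) (hcop.pow_left n)).1⟩

lemma eq_of_closureNhds_inf_le {x y z : ℕ+} (h : closureNhds x ⊓ closureNhds z ≤ closureNhds y)
    {q w : ℕ} (hq : q.Prime) (hqy : ¬ q ∣ y) (hqw : ¬ q ∣ w) (hx : q ∣ x ∨ w = x)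
    (hz : q ∣ z ∨ w = z) : w = y := by
  have hyq : (y : ℕ).Coprime (q ^ (w + y)) := (hq.coprime_iff_not_dvd.2 hqy).symm.pow_right _
  obtain ⟨t, ⟨hqt, htw⟩, hty⟩ :=
    ((frequently_closureNhds_inf_modEq hq hqw hx hz (w + y)).and_eventually
      (h (eventually_closureNhds_modEq (pow_pos hq.pos _) hyq))).exists
  exact eq_of_modEq_pow_add hq.one_lt (htw.symm.trans (hty _ dvd_rfl (hqt.pow_left _)))

lemma eq_one_of_closureNhds_inf_le {x z : ℕ+} (hx : x ≠ 1)
    (h : closureNhds x ⊓ closureNhds z ≤ closureNhds 1) : z = 1 := by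
  obtain ⟨q, hq, hqx⟩ := Nat.exists_prime_and_dvd (PNat.coe_eq_one_iff.not.2 hx)
  have hq1 : ¬ q ∣ ((1 : ℕ+) : ℕ) := hq.not_dvd_one
  by_cases hqz : q ∣ z
  · have hqs : ¬ q ∣ q + 1 := by simpa using hq.ne_one
    have := eq_of_closureNhds_inf_le h hq hq1 hqs (.inl hqx) (.inl hqz)
    exact absurd (Nat.succ_injective this) hq.ne_zero
  · exact PNat.coe_eq_one_iff.1
      (eq_of_closureNhds_inf_le h hq hq1 hqz (.inl hqx) (.inr rfl))

lemma closureNhds_one_inf_le {y z : ℕ+} (hz : z ≠ 1)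
    (h : (z : ℕ).primeFactors ⊆ (y : ℕ).primeFactors) :
    closureNhds 1 ⊓ closureNhds z ≤ closureNhds y := by
  refine (hasBasis_closureNhds y).ge_iff.2 fun c ⟨hc, hyc⟩ => ?_
  have hzc : (z : ℕ).Coprime c := coprime_of_primeFactors_subset z.ne_zero h hyc
  have hpos : 0 < c ^ (1 + z : ℕ) := pow_pos hc _
  filter_upwards [mem_inf_of_left (eventually_closureNhds_modEq (x := 1) hpos (by simp)),
    mem_inf_of_right (eventually_closureNhds_modEq hpos (hzc.pow_right _))] with t ht1 htz
  intro g hgc hgt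
  -- `1 ≡ t ≡ z` modulo `g ^ (1 + z)`, which exceeds both `1` and `z ≠ 1` unless `g = 1`.
  have hgpow := pow_dvd_pow_of_dvd hgc (1 + z : ℕ)
  have hmod : 1 ≡ z [MOD g ^ (1 + z : ℕ)] :=
    (ht1 _ hgpow (hgt.pow_left _)).symm.trans (htz _ hgpow (hgt.pow_left _))
  obtain rfl | hg : g = 1 ∨ 1 < g := by have := Nat.pos_of_dvd_of_pos hgc hc; lia
  · exact Nat.modEq_one
  · exact absurd (PNat.coe_eq_one_iff.1 (eq_of_modEq_pow_add hg hmod).symm) hz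

lemma closureNhds_one_inf_le_iff {y z : ℕ+} (hy : y ≠ 1) (hz : z ≠ 1) :
    closureNhds 1 ⊓ closureNhds z ≤ closureNhds y ↔
      (z : ℕ).primeFactors ⊆ (y : ℕ).primeFactors := by
  refine ⟨fun h q hqz => ?_, closureNhds_one_inf_le hz⟩
  have hq : q.Prime := Nat.prime_of_mem_primeFactors hqz
  by_contra hqy
  have := eq_of_closureNhds_inf_le h hq (fun hdvd => hqy (hq.mem_primeFactors hdvd y.ne_zero))
    hq.not_dvd_one (.inr rfl) (.inl (Nat.dvd_of_mem_primeFactors hqz))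
  exact hy (PNat.coe_eq_one_iff.1 this.symm)

end Closures

section Homeomorph

variable (h : ℕ+ ≃ₜ ℕ+)

lemma map_one : h 1 = 1 := by
  by_contra hne
  obtain ⟨y, hy⟩ := h.surjective 1
  have hy1 : y ≠ 1 := by rintro rfl; exact hne hy
  have hle : closureNhds 1 ⊓ closureNhds (y ^ 2) ≤ closureNhds y :=
    closureNhds_one_inf_le (by simpa using hy1) (by simp [Nat.primeFactors_pow])
  rw [← closureNhds_inf_le_map_iff h, hy] at hle
  have hyy : y ^ 2 = y := h.injective ((eq_one_of_closureNhds_inf_le hne hle).trans hy.symm)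
  exact hy1 (by simpa [sq] using hyy)

lemma map_eq_one_iff {x : ℕ+} : h x = 1 ↔ x = 1 := by
  rw [← h.injective.eq_iff (a := x), map_one]

lemma primeFactors_map_subset_iff {y z : ℕ+} :
    (h z : ℕ).primeFactors ⊆ (h y : ℕ).primeFactors ↔
      (z : ℕ).primeFactors ⊆ (y : ℕ).primeFactors := by
  by_cases hz : z = 1
  · simp [hz, map_one]
  by_cases hy : y = 1
  · simp [hy, map_one, map_eq_one_iff]
  rw [← closureNhds_one_inf_le_iff hy hz, ← closureNhds_inf_le_map_iff h, map_one,
    closureNhds_one_inf_le_iff ((map_eq_one_iff h).not.2 hy) ((map_eq_one_iff h).not.2 hz)]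

lemma primeFactors_map_eq_iff {y z : ℕ+} :
    (h z : ℕ).primeFactors = (h y : ℕ).primeFactors ↔
      (z : ℕ).primeFactors = (y : ℕ).primeFactors := by
  simp only [Finset.Subset.antisymm_iff, primeFactors_map_subset_iff]

variable {h}

lemma exists_continuous_pow_of_map_eq_pow {p x : ℕ+} {k : ℕ} (hk : k ≠ 0)
    (hpx : h p = h x ^ k) : ∃ f : ℕ+ → ℕ+, Continuous f ∧ f x = p ∧
      ∀ s : ℕ+, (s : ℕ).Prime → ∃ i, f s = s ^ i := by
  refine ⟨fun s => h.symm (h s ^ k), h.symm.continuous.comp (h.continuous.pow k),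
    (h.symm_apply_eq).2 hpx.symm, fun s hs => ?_⟩
  have hfs : (h.symm (h s ^ k) : ℕ).primeFactors = (s : ℕ).primeFactors := by
    rw [← primeFactors_map_eq_iff h, h.apply_symm_apply, PNat.pow_coe, Nat.primeFactors_pow _ hk]
  obtain ⟨i, -, hi⟩ := exists_eq_pow_of_primeFactors_eq_singleton (hfs.trans hs.primeFactors)
  exact ⟨i, PNat.coe_injective (by rw [hi, PNat.pow_coe])⟩

lemma eq_one_of_map_eq_map_pow_pow {p : ℕ+} {j k : ℕ} (hp : (p : ℕ).Prime) (hj : j ≠ 0)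
    (hk : k ≠ 0) (hpj : h p = h (p ^ j) ^ k) : j = 1 := by
  obtain ⟨f, hf, hfp, hpow⟩ := exists_continuous_pow_of_map_eq_pow hk hpj
  have hlt : 1 < (p : ℕ) ^ j := Nat.one_lt_pow hj hp.one_lt
  have hcop : ((p : ℕ) ^ j).Coprime ((p : ℕ) ^ j - 1) :=
    (Nat.coprime_self_sub_right hlt.le).2 (Nat.coprime_one_right _)
  obtain ⟨i, hi⟩ := exists_modEq_pow_of_continuousAt (x := p ^ j) hf.continuousAt hpow
    (Nat.sub_pos_of_lt hlt) (by rwa [PNat.pow_coe])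
    (by rw [hfp]; exact hcop.coprime_dvd_left (dvd_pow_self _ hj))
  have hone : (p : ℕ) ^ j ≡ 1 [MOD (p : ℕ) ^ j - 1] :=
    ((Nat.modEq_iff_dvd' hlt.le).2 dvd_rfl).symm
  rw [hfp, PNat.pow_coe] at hi
  have hj1 : j ≤ 1 :=
    le_one_of_modEq_one_pow_sub_one hp.one_lt (hi.trans (by simpa using hone.pow i))
  lia

variable (h)

lemma prime_map {p : ℕ+} (hp : (p : ℕ).Prime) : (h p : ℕ).Prime := by
  have hp1 : h p ≠ 1 := fun e => hp.ne_one (PNat.coe_eq_one_iff.2 ((map_eq_one_iff h).1 e))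
  obtain ⟨q, hq, hqp⟩ := Nat.exists_prime_and_dvd (PNat.coe_eq_one_iff.not.2 hp1)
  obtain ⟨x, hx⟩ := h.surjective ⟨q, hq.pos⟩
  replace hx : (h x : ℕ) = q := by rw [hx, PNat.mk_coe]
  have hx1 : x ≠ 1 := by
    rintro rfl
    exact hq.ne_one (by rw [← hx, map_one, PNat.one_coe])
  have hxp : (x : ℕ).primeFactors = {(p : ℕ)} := by
    have hsub : (x : ℕ).primeFactors ⊆ (p : ℕ).primeFactors := by
      rw [← primeFactors_map_subset_iff h, hx]
      exact Nat.primeFactors_mono hqp (h p).ne_zero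
    rw [hp.primeFactors, Finset.subset_singleton_iff] at hsub
    simpa [hx1] using hsub
  have hpq : (h p : ℕ).primeFactors = {q} := by
    rw [← hq.primeFactors, ← hx, primeFactors_map_eq_iff, hxp, hp.primeFactors]
  obtain ⟨j, hj, hxj⟩ := exists_eq_pow_of_primeFactors_eq_singleton hxp
  obtain ⟨k, hk, hpk⟩ := exists_eq_pow_of_primeFactors_eq_singleton hpq
  obtain rfl : x = p ^ j := PNat.coe_injective (by rw [hxj, PNat.pow_coe])
  obtain rfl : j = 1 := eq_one_of_map_eq_map_pow_pow hp hj hk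
    (PNat.coe_injective (by rw [hpk, PNat.pow_coe, hx]))
  rwa [← pow_one p, hx]

lemma map_dvd_map_iff {p : ℕ+} (hp : (p : ℕ).Prime) (x : ℕ+) :
    (h p : ℕ) ∣ h x ↔ (p : ℕ) ∣ x := by
  rw [dvd_iff_primeFactors_subset hp x.ne_zero,
    dvd_iff_primeFactors_subset (prime_map h hp) (h x).ne_zero, primeFactors_map_subset_iff]

end Homeomorph

end GolombSpace

/-- For any homeomorphism `h` of the Golomb space and any prime `p`, `h(pℕ) = h(p)ℕ`;
consequently `h` restricts to a homeomorphism of the subspace `ℕ_τ \ pℕ` onto the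
subspace `ℕ_τ \ h(p)ℕ`. -/
theorem golomb_homeo_multiples (h : ℕ+ ≃ₜ ℕ+) (p : ℕ+) (hp : (p : ℕ).Prime) :
    h '' {x : ℕ+ | (p : ℕ) ∣ (x : ℕ)} = {x : ℕ+ | (↑(h p) : ℕ) ∣ (x : ℕ)} ∧
    ∃ g : Np (p : ℕ) ≃ₜ Np (↑(h p) : ℕ), ∀ y : Np (p : ℕ), (↑(g y) : ℕ+) = h ↑y := by
  have hdvd (x : ℕ+) : (p : ℕ) ∣ x ↔ (h p : ℕ) ∣ h x :=
    (GolombSpace.map_dvd_map_iff h hp x).symm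
  refine ⟨Set.ext fun y => ?_, h.subtype fun x => (hdvd x).not, fun _ => rfl⟩
  obtain ⟨x, rfl⟩ := h.surjective y
  rw [h.injective.mem_set_image]
  exact hdvd x
end
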